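/- Fix ε ∈ {+1,−1} and define R^{εε}(u) := Σ_{k=0}^{⌊r/2⌋} ( Π_{m=1}^{k} (u−(2m−1))/(u+(2m−1)) )·p_{εε}·P_{r−2k} ∈ Cl ⊗ Cl. Let ι_{12}, ι_{23}, ι_{13} : Cl ⊗ Cl → Cl ⊗ Cl ⊗ Cl be the ℂ-algebra homomorphisms determined by ι_{12}(a⊗b) = a⊗b⊗1, ι_{23}(a⊗b) = 1⊗a⊗b, ι_{13}(a⊗b) = a⊗1⊗b. Then R^{εε}(u) is an so_{2r}-invariant solution of the Yang–Baxter equation: for all u, v ∈ ℂ such that none of u, v, u+v equals −(2m−1) for any m = 1,...,⌊r/2⌋, one has ι_{12}(R^{εε}(u))·ι_{13}(R^{εε}(u+v))·ι_{23}(R^{εε}(v)) = ι_{23}(R^{εε}(v))·ι_{13}(R^{εε}(u+v))·ι_{12}(R^{εε}(u)) in Cl ⊗ Cl ⊗ Cl. -/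

import Mathlib

open scoped TensorProduct

noncomputable section

/-- The quadratic form `x₁² + ⋯ + x_{2r}²` on `ℂ^{2r}`. -/
def Qf (r : ℕ) : QuadraticForm ℂ (Fin (2*r) → ℂ) :=
  QuadraticMap.weightedSumSquares ℂ (fun _ : Fin (2*r) => (1:ℂ))

/-- The Clifford algebra of `Qf r`. -/
abbrev Cl (r : ℕ) := CliffordAlgebra (Qf r)

/-- The generators `Γ_i`. -/
def Γgen (r : ℕ) (i : Fin (2*r)) : Cl r :=
  CliffordAlgebra.ι (Qf r) (Pi.single i 1)

/-- The antisymmetrised products `Γ_{[i₁…i_k]}`. -/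
def Γbr (r k : ℕ) (i : Fin k → Fin (2*r)) : Cl r :=
  ((k.factorial : ℂ))⁻¹ •
    ∑ σ : Equiv.Perm (Fin k),
      ((Equiv.Perm.sign σ : ℤ) : ℂ) • (List.ofFn fun j => Γgen r (i (σ j))).prod

/-- The invariants `I_k ∈ Cl ⊗ Cl`. -/
def Ik (r k : ℕ) : Cl r ⊗[ℂ] Cl r :=
  ∑ i : Fin k → Fin (2*r), (Γbr r k i) ⊗ₜ[ℂ] (Γbr r k i)

/-- The split Casimir element `Ĉ = −I₂/(16(2r−2))`. -/
def sC (r : ℕ) : Cl r ⊗[ℂ] Cl r := (-(16*(2*(r:ℂ)-2))⁻¹) • Ik r 2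

/-- The top element `Γ_{2r+1} = (−i)^r Γ₁⋯Γ_{2r}`. -/
def Γtop (r : ℕ) : Cl r :=
  ((-Complex.I)^r) • (List.ofFn fun i : Fin (2*r) => Γgen r i).prod

/-- The chirality projector `p_ε = (1 + ε Γ_{2r+1})/2`. -/
def pCh (r : ℕ) (ε : ℂ) : Cl r := (2:ℂ)⁻¹ • (1 + ε • Γtop r)

/-- The chirality projectors `p_{εε'} = p_ε ⊗ p_{ε'}`. -/
def ppCh (r : ℕ) (ε ε' : ℂ) : Cl r ⊗[ℂ] Cl r := (pCh r ε) ⊗ₜ[ℂ] (pCh r ε')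

/-- The eigenvalues `c_k = (2k(2r−k) − r(2r−1))/(16(r−1))`. -/
def cEv (r k : ℕ) : ℂ :=
  (2*(k:ℂ)*(2*(r:ℂ)-(k:ℂ)) - (r:ℂ)*(2*(r:ℂ)-1)) / (16*((r:ℂ)-1))

/-- The spectral projectors `P_k = Π_{j≠k} (Ĉ − c_j)/(c_k − c_j)`. -/
def Pk (r k : ℕ) : Cl r ⊗[ℂ] Cl r :=
  (((List.range (r+1)).filter (fun j => j ≠ k)).map
    (fun j => (cEv r k - cEv r j)⁻¹ • (sC r - cEv r j • 1))).prod

/-- `P_r^S = (p_{++} + p_{−−})·P_r`. -/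
def PrS (r : ℕ) : Cl r ⊗[ℂ] Cl r := (ppCh r 1 1 + ppCh r (-1) (-1)) * Pk r r

/-- The ascending factorial `a_k(u) = (u/2)(u/2+1)⋯(u/2+k−1)`. -/
def asc (u : ℂ) (k : ℕ) : ℂ := ∏ j ∈ Finset.range k, (u/2 + (j:ℂ))

/-- The R-matrix `R^{εε}(u) = Σ_{k=0}^{⌊r/2⌋} (Π_{m=1}^{k} (u−(2m−1))/(u+(2m−1)))·p_{εε}·P_{r−2k}`. -/
def Rmat (r : ℕ) (ε : ℂ) (u : ℂ) : Cl r ⊗[ℂ] Cl r :=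
  ∑ k ∈ Finset.range (r/2+1),
    (∏ m ∈ Finset.range k, (u - (2*(m:ℂ)+1))/(u + (2*(m:ℂ)+1))) •
      (ppCh r ε ε * Pk r (r-2*k))

/-! `½ ∑ Γ_j ⊗ Γ_j`, placed in the three pairs of tensor factors, gives elements `x`, `y`, `z` which
satisfy the relations of `so(3)` with commutators replaced by anticommutators, and have integer
weights. Up to the chirality projectors, which commute with everything else, the three factors of
the equation are even functions `F`, `G`, `H` of `x`, `y`, `z`, and the recursion for their
coefficients says that they intertwine the element `lax α β γ x y z` with itself after exchanging
two of the parameters. Hence `D = F G H - H G F` intertwines `lax α β γ x y z` with the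
product-reversed element `lax β α γ y x z`, so each `D * lax α β γ x y z ^ k` is antisymmetric under
reversal. Compressed to the vectors of weight zero for `z`, an element of the algebra generated by
`x²`, `y²`, `z²` is a polynomial in the Casimir element `x² + y² + z²` and hence symmetric, so these
compressions vanish. As powers of `lax α β γ x y z` move the weight-zero vectors, and their images
under `mirror (-1) x y 1`, to all even weights, where `D` is supported, `D = 0`. -/

section Weights

variable {K 𝒞 : Type*} [Field K] [Ring 𝒞] [Algebra K 𝒞]

variable (K) in
/-- The elements of weight `m` for left multiplication by `x`. -/
def weightSpace (x : 𝒞) (m : ℤ) : Submodule K 𝒞 :=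
  Module.End.eigenspace (LinearMap.mulLeft K x) (m : K)

variable (K) in
/-- Left multiplication by `x` is diagonalizable, with integer eigenvalues in `[a, b]`. -/
def HasWeightsIn (x : 𝒞) (a b : ℤ) : Prop :=
  ⨆ m ∈ Set.Icc a b, weightSpace K x m = ⊤

theorem mem_weightSpace {x v : 𝒞} {m : ℤ} : v ∈ weightSpace K x m ↔ x * v = (m : K) • v := by
  simp [weightSpace]

theorem weightSpace_neg (x : 𝒞) (m : ℤ) : weightSpace K (-x) m = weightSpace K x (-m) := by
  ext v
  simp [mem_weightSpace, neg_eq_iff_eq_neg]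

theorem mul_mem_weightSpace_of_commute {x a v : 𝒞} {m : ℤ} (h : Commute a x)
    (hv : v ∈ weightSpace K x m) : a * v ∈ weightSpace K x m := by
  rw [mem_weightSpace] at hv ⊢
  rw [← mul_assoc, ← h.eq, mul_assoc, hv, mul_smul_comm]

theorem sq_mul_of_mem_weightSpace {z v : 𝒞} {m : ℤ} (hv : v ∈ weightSpace K z m) :
    z ^ 2 * v = (m : K) ^ 2 • v := by
  rw [mem_weightSpace] at hv
  rw [sq, mul_assoc, hv, mul_smul_comm, hv, smul_smul, sq]

theorem aeval_mul_of_mul_eq_smul {x v : 𝒞} {c : K} (hv : x * v = c • v) (p : Polynomial K) :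
    Polynomial.aeval x p * v = p.eval c • v := by
  induction p using Polynomial.induction_on with
  | C a => simp [Algebra.smul_def]
  | add p q hp hq => simp [add_mul, add_smul, hp, hq]
  | monomial n a ih =>
    simp only [pow_succ, ← mul_assoc, map_mul _ _ Polynomial.X, Polynomial.aeval_X] at ih ⊢
    rw [mul_assoc, hv, mul_smul_comm, ih, smul_smul, Polynomial.eval_mul_X, mul_comm]

theorem HasWeightsIn.ext {x y z : 𝒞} {a b : ℤ} (hx : HasWeightsIn K x a b)
    (h : ∀ m ∈ Set.Icc a b, ∀ v ∈ weightSpace K x m, y * v = z * v) : y = z := by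
  have : (⨆ m ∈ Set.Icc a b, weightSpace K x m)
      ≤ LinearMap.eqLocus (LinearMap.mulLeft K y) (LinearMap.mulLeft K z) :=
    iSup₂_le h
  rw [hx] at this
  simpa using this (Submodule.mem_top (x := (1 : 𝒞)))

theorem HasWeightsIn.neg {x : 𝒞} {a b : ℤ} (hx : HasWeightsIn K x a b) :
    HasWeightsIn K (-x) (-b) (-a) := by
  rw [HasWeightsIn, eq_top_iff, ← hx]
  refine iSup₂_le fun m hm => ?_
  rw [← neg_neg m, ← weightSpace_neg]
  exact le_iSup₂_of_le (-m) ⟨neg_le_neg hm.2, neg_le_neg hm.1⟩ le_rfl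

theorem hasWeightsIn_intCast (m : ℤ) : HasWeightsIn K (m : 𝒞) m m := by
  have : weightSpace K (m : 𝒞) m = ⊤ := by
    ext v
    simp [mem_weightSpace, ← zsmul_eq_mul, Int.cast_smul_eq_zsmul]
  simp [HasWeightsIn, this]

theorem HasWeightsIn.add_of_isIdempotentElem {x p : 𝒞} {a b : ℤ} (hx : HasWeightsIn K x a b)
    (hp : IsIdempotentElem p) (hxp : Commute p x) : HasWeightsIn K (x + p) a (b + 1) := by
  rw [HasWeightsIn, eq_top_iff, ← hx]
  refine iSup₂_le fun m hm v hv => ?_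
  have hpv : p * v ∈ weightSpace K (x + p) (m + 1) := by
    have := mem_weightSpace.1 (mul_mem_weightSpace_of_commute hxp hv)
    rw [mem_weightSpace, add_mul, this, ← mul_assoc p, hp.eq]
    module
  have hqv : v - p * v ∈ weightSpace K (x + p) m := by
    have := mem_weightSpace.1 (sub_mem hv (mul_mem_weightSpace_of_commute hxp hv))
    rw [mem_weightSpace, add_mul, this, mul_sub p, ← mul_assoc p p, hp.eq, sub_self, add_zero]
  rw [← add_sub_cancel (p * v) v]
  exact add_mem (Submodule.mem_iSup_of_mem _ (Submodule.mem_iSup_of_mem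
      ⟨by linarith [hm.1], by linarith [hm.2]⟩ hpv))
    (Submodule.mem_iSup_of_mem _ (Submodule.mem_iSup_of_mem
      ⟨hm.1, by linarith [hm.2]⟩ hqv))

section CharZero

variable [CharZero K]

theorem HasWeightsIn.eq_zero_of_notMem {x v : 𝒞} {a b m : ℤ} (hx : HasWeightsIn K x a b)
    (hm : m ∉ Set.Icc a b) (hv : v ∈ weightSpace K x m) : v = 0 := by
  have hind : iSupIndep (weightSpace K x) :=
    (Module.End.eigenspaces_iSupIndep (LinearMap.mulLeft K x)).comp Int.cast_injective
  have htop : ⨆ k, ⨆ (_ : k ≠ m), weightSpace K x k = ⊤ := by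
    rw [eq_top_iff, ← hx]
    exact iSup₂_mono' fun k hk => ⟨k, fun h => hm (h ▸ hk), le_rfl⟩
  simpa [htop, hv] using (Submodule.disjoint_def.1 (hind m)) v

variable (K) in
/-- The projection onto the weight space `0` along the other weight spaces, for an `x` with
weights in `[-r, r]`. -/
def zeroProj (r : ℕ) (x : 𝒞) : 𝒞 :=
  Polynomial.aeval x (Lagrange.basis (Finset.Icc (-r : ℤ) r) (Int.cast : ℤ → K) 0)

theorem zeroProj_mul_of_mem_zero (r : ℕ) {x v : 𝒞} (hv : v ∈ weightSpace K x 0) :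
    zeroProj K r x * v = v := by
  rw [zeroProj, aeval_mul_of_mul_eq_smul (mem_weightSpace.1 hv),
    Lagrange.eval_basis_self (Int.cast_injective.injOn) (by simp), one_smul]

theorem HasWeightsIn.zeroProj_mul_of_ne_zero {r : ℕ} {x v : 𝒞} {m : ℤ}
    (hx : HasWeightsIn K x (-r) r) (hm : m ≠ 0) (hv : v ∈ weightSpace K x m) :
    zeroProj K r x * v = 0 := by
  by_cases hmr : m ∈ Set.Icc (-r : ℤ) r
  · rw [zeroProj, aeval_mul_of_mul_eq_smul (mem_weightSpace.1 hv),
      Lagrange.eval_basis_of_ne hm.symm (by simpa using hmr), zero_smul]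
  · rw [hx.eq_zero_of_notMem hmr hv, mul_zero]

theorem HasWeightsIn.zeroProj_mem {r : ℕ} {x : 𝒞} (hx : HasWeightsIn K x (-r) r) :
    zeroProj K r x ∈ weightSpace K x 0 := by
  rw [mem_weightSpace, Int.cast_zero, zero_smul]
  refine hx.ext fun m _ v hv => ?_
  rw [mul_assoc, zero_mul]
  by_cases hm : m = 0
  · subst hm
    rw [zeroProj_mul_of_mem_zero r hv, mem_weightSpace.1 hv, Int.cast_zero, zero_smul]
  · rw [hx.zeroProj_mul_of_ne_zero hm hv, mul_zero]

end CharZero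

end Weights

section AnticommutatorSpin

variable {K 𝒞 : Type*} [Field K] [Ring 𝒞] [Algebra K 𝒞] {x y z : 𝒞}

/-- The relations of the algebra `so(3)` with commutators replaced by anticommutators. -/
structure IsAnticommutatorSpin (x y z : 𝒞) : Prop where
  anticomm_xy : x * y + y * x = z
  anticomm_yz : y * z + z * y = x
  anticomm_zx : z * x + x * z = y

/-- The central element `x² + y² + z²` of the algebra generated by an anticommutator spin. -/
def casimir (x y z : 𝒞) : 𝒞 := x ^ 2 + y ^ 2 + z ^ 2

/-- Raises the weight for `z` by two; `ladder x (-y)` lowers it by two. -/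
def ladder (x y : 𝒞) : 𝒞 := (x + y) * (x - y)

variable (K) in
/-- The eigenvalue, a polynomial in the casimir, of `ladder x (-y) * ladder x y` on weight `m`. -/
def ladderNorm (x y z : 𝒞) (m : K) : 𝒞 :=
  (casimir x y z - algebraMap K 𝒞 ((m + 1) * (m + 2))) *
    (casimir x y z - algebraMap K 𝒞 (m * (m + 1)))

theorem ladderNorm_mem {S : Subalgebra K 𝒞} (hc : casimir x y z ∈ S) (m : K) :
    ladderNorm K x y z m ∈ S :=
  mul_mem (sub_mem hc (S.algebraMap_mem _)) (sub_mem hc (S.algebraMap_mem _))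

namespace IsAnticommutatorSpin

theorem rotate (h : IsAnticommutatorSpin x y z) : IsAnticommutatorSpin y z x :=
  ⟨h.anticomm_yz, h.anticomm_zx, h.anticomm_xy⟩

theorem swap (h : IsAnticommutatorSpin x y z) : IsAnticommutatorSpin y x z :=
  ⟨by rw [add_comm, h.anticomm_xy], by rw [add_comm, h.anticomm_zx],
    by rw [add_comm, h.anticomm_yz]⟩

theorem neg (h : IsAnticommutatorSpin x y z) : IsAnticommutatorSpin x (-y) (-z) where
  anticomm_xy := by rw [← h.anticomm_xy]; noncomm_ring
  anticomm_yz := by rw [← h.anticomm_yz]; noncomm_ring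
  anticomm_zx := by rw [← h.anticomm_zx]; noncomm_ring

end IsAnticommutatorSpin

theorem casimir_rotate (x y z : 𝒞) : casimir y z x = casimir x y z := by
  rw [casimir, casimir]; abel

theorem casimir_neg (x y z : 𝒞) : casimir x (-y) (-z) = casimir x y z := by
  rw [casimir, casimir, neg_sq, neg_sq]

theorem ladderNorm_neg (x y z : 𝒞) (m : K) :
    ladderNorm K x (-y) (-z) m = ladderNorm K x y z m := by
  rw [ladderNorm, ladderNorm, casimir_neg]

theorem ladder_add_ladder_neg (x y : 𝒞) :
    ladder x y + ladder x (-y) = (2 : ℕ) • (x ^ 2 - y ^ 2) := by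
  rw [ladder, ladder]; noncomm_ring

namespace IsAnticommutatorSpin

theorem commute_casimir_z (h : IsAnticommutatorSpin x y z) : Commute (casimir x y z) z := by
  rw [Commute, SemiconjBy, ← sub_eq_zero, casimir]
  have hx : x ^ 2 * z - z * x ^ 2 = x * y - y * x := by
    rw [← h.anticomm_zx]; noncomm_ring
  have hy : y ^ 2 * z - z * y ^ 2 = y * x - x * y := by
    rw [← h.anticomm_yz]; noncomm_ring
  linear_combination (norm := noncomm_ring) hx + hy

theorem commute_casimir_x (h : IsAnticommutatorSpin x y z) : Commute (casimir x y z) x :=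
  casimir_rotate x y z ▸ h.rotate.commute_casimir_z

theorem commute_casimir_y (h : IsAnticommutatorSpin x y z) : Commute (casimir x y z) y :=
  casimir_rotate z x y ▸ h.rotate.rotate.commute_casimir_z

theorem commute_casimir_ladder (h : IsAnticommutatorSpin x y z) :
    Commute (casimir x y z) (ladder x y) :=
  (h.commute_casimir_x.add_right h.commute_casimir_y).mul_right
    (h.commute_casimir_x.sub_right h.commute_casimir_y)

theorem add_mul_mem_weightSpace (h : IsAnticommutatorSpin x y z) {m : ℤ} {v : 𝒞}
    (hv : v ∈ weightSpace K z m) : (x + y) * v ∈ weightSpace K z (1 - m) := by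
  rw [mem_weightSpace] at hv ⊢
  have hz : z * (x + y) = (x + y) - (x + y) * z := by
    linear_combination (norm := noncomm_ring) h.anticomm_yz + h.anticomm_zx
  rw [← mul_assoc, hz, sub_mul, mul_assoc _ z, hv, mul_smul_comm]
  push_cast
  module

theorem sub_mul_mem_weightSpace (h : IsAnticommutatorSpin x y z) {m : ℤ} {v : 𝒞}
    (hv : v ∈ weightSpace K z m) : (x - y) * v ∈ weightSpace K z (-1 - m) := by
  have hv' : v ∈ weightSpace K (-z) (-m) := by rwa [weightSpace_neg, neg_neg]
  have := h.neg.add_mul_mem_weightSpace hv'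
  rw [weightSpace_neg, ← sub_eq_add_neg] at this
  convert this using 2
  ring

theorem ladder_mul_mem_weightSpace (h : IsAnticommutatorSpin x y z) {m : ℤ} {v : 𝒞}
    (hv : v ∈ weightSpace K z m) : ladder x y * v ∈ weightSpace K z (m + 2) := by
  rw [ladder, mul_assoc]
  convert h.add_mul_mem_weightSpace (h.sub_mul_mem_weightSpace hv) using 2
  ring

theorem ladder_neg_mul_mem_weightSpace (h : IsAnticommutatorSpin x y z) {m : ℤ} {v : 𝒞}
    (hv : v ∈ weightSpace K z m) : ladder x (-y) * v ∈ weightSpace K z (m - 2) := by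
  have hv' : v ∈ weightSpace K (-z) (-m) := by rwa [weightSpace_neg, neg_neg]
  have := h.neg.ladder_mul_mem_weightSpace hv'
  rw [weightSpace_neg] at this
  convert this using 2
  ring

theorem add_mul_add_mul (h : IsAnticommutatorSpin x y z) {m : ℤ} {v : 𝒞}
    (hv : v ∈ weightSpace K z m) :
    (x + y) * ((x + y) * v) = casimir x y z * v - ((m : K) * (m - 1)) • v := by
  have hsq : (x + y) * (x + y) = casimir x y z - z ^ 2 + z := by
    rw [casimir]
    linear_combination (norm := noncomm_ring) h.anticomm_xy
  rw [← mul_assoc, hsq, add_mul, sub_mul, sq_mul_of_mem_weightSpace hv, mem_weightSpace.1 hv]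
  module

theorem sub_mul_sub_mul (h : IsAnticommutatorSpin x y z) {m : ℤ} {v : 𝒞}
    (hv : v ∈ weightSpace K z m) :
    (x - y) * ((x - y) * v) = casimir x y z * v - ((m : K) * (m + 1)) • v := by
  have hv' : v ∈ weightSpace K (-z) (-m) := by rwa [weightSpace_neg, neg_neg]
  have := h.neg.add_mul_add_mul hv'
  rw [casimir_neg, ← sub_eq_add_neg] at this
  rw [this]
  push_cast
  module

theorem ladder_neg_mul_ladder_mul (h : IsAnticommutatorSpin x y z) {m : ℤ} {v : 𝒞}
    (hv : v ∈ weightSpace K z m) :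
    ladder x (-y) * (ladder x y * v) = ladderNorm K x y z m * v := by
  have hc := h.commute_casimir_x.sub_right h.commute_casimir_y
  have hd := h.sub_mul_mem_weightSpace hv
  rw [ladderNorm, ladder, ladder, sub_neg_eq_add, ← sub_eq_add_neg, mul_assoc (x + y),
    mul_assoc (x - y), h.add_mul_add_mul hd, mul_sub, ← mul_assoc (x - y),
    ← hc.eq, mul_assoc (casimir x y z), mul_smul_comm, h.sub_mul_sub_mul hv]
  simp only [Algebra.algebraMap_eq_smul_one, sub_mul, mul_sub, smul_mul_assoc, mul_smul_comm,
    one_mul, mul_assoc]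
  push_cast
  module

end IsAnticommutatorSpin

end AnticommutatorSpin

section Surjectivity

variable {K 𝒞 : Type*} [Field K] [CharZero K] [Ring 𝒞] [Algebra K 𝒞] {x y z : 𝒞} {r : ℕ}

namespace IsAnticommutatorSpin

theorem exists_casimir_mul_sub_eq (h : IsAnticommutatorSpin x y z)
    (hz : HasWeightsIn K z (-r) r) {k n : ℕ} (hkn : k < n) {v : 𝒞} (hv : v ∈ weightSpace K z n) :
    ∃ w ∈ weightSpace K z n, casimir x y z * w - ((k : K) * (k + 1)) • w = v := by
  induction d : r + 1 - n generalizing y z n v with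
  | zero =>
    refine ⟨0, zero_mem _, ?_⟩
    rw [hz.eq_zero_of_notMem (m := n) (by simp; omega) hv, mul_zero, smul_zero, sub_zero]
  | succ d ih =>
    have hz' : HasWeightsIn K (-z) (-r) r := by simpa using hz.neg
    have hu : (x - y) * v ∈ weightSpace K (-z) ((n + 1 : ℕ) : ℤ) := by
      rw [weightSpace_neg]
      convert h.sub_mul_mem_weightSpace hv using 2
      push_cast
      ring
    obtain ⟨w, hw, hwu⟩ := ih h.neg hz' (hkn.trans n.lt_succ_self) hu (by omega)
    rw [casimir_neg] at hwu
    have hw' : (x - y) * w ∈ weightSpace K z n := by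
      rw [weightSpace_neg] at hw
      convert h.sub_mul_mem_weightSpace hw using 2
      push_cast
      ring
    have hc := h.commute_casimir_x.sub_right h.commute_casimir_y
    have hne : (n : K) * (n + 1) - k * (k + 1) ≠ 0 := by
      rw [sub_ne_zero]
      exact_mod_cast (Nat.mul_lt_mul'' hkn (Nat.add_lt_add_right hkn 1)).ne'
    refine ⟨((n : K) * (n + 1) - k * (k + 1))⁻¹ • (v - (x - y) * w),
      Submodule.smul_mem _ _ (sub_mem hv hw'), ?_⟩
    have key : casimir x y z * ((x - y) * w) - ((k : K) * (k + 1)) • ((x - y) * w)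
        = casimir x y z * v - ((n : K) * (n + 1)) • v := by
      have := h.sub_mul_sub_mul hv
      push_cast at this
      rw [← this, ← hwu, mul_sub, mul_smul_comm, ← mul_assoc, ← mul_assoc, hc.eq]
    rw [mul_smul_comm, smul_comm, ← smul_sub, inv_smul_eq_iff₀ hne, mul_sub, smul_sub,
      sub_sub_sub_comm, key]
    module

theorem exists_add_mul_eq (h : IsAnticommutatorSpin x y z) (hz : HasWeightsIn K z (-r) r)
    {n : ℕ} {v : 𝒞} (hv : v ∈ weightSpace K z (n + 1)) :
    ∃ w ∈ weightSpace K z (-n), (x + y) * w = v := by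
  obtain ⟨u, hu, huv⟩ := h.exists_casimir_mul_sub_eq hz n.lt_succ_self hv
  refine ⟨(x + y) * u, ?_, ?_⟩
  · convert h.add_mul_mem_weightSpace hu using 2
    push_cast
    ring
  · rw [h.add_mul_add_mul hu, ← huv]
    push_cast
    module

theorem exists_ladder_mul_eq (h : IsAnticommutatorSpin x y z) (hz : HasWeightsIn K z (-r) r)
    {n : ℕ} {v : 𝒞} (hv : v ∈ weightSpace K z (n + 2)) :
    ∃ w ∈ weightSpace K z n, ladder x y * w = v := by
  obtain ⟨u, hu, rfl⟩ := h.exists_add_mul_eq hz (n := n + 1)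
    (by convert hv using 2; push_cast; ring)
  have hz' : HasWeightsIn K (-z) (-r) r := by simpa using hz.neg
  obtain ⟨w, hw, rfl⟩ := h.neg.exists_add_mul_eq hz' (by rw [weightSpace_neg]; exact_mod_cast hu)
  rw [weightSpace_neg, neg_neg] at hw
  exact ⟨w, hw, by rw [ladder, mul_assoc, ← sub_eq_add_neg]⟩

theorem exists_ladder_pow_mul_eq (h : IsAnticommutatorSpin x y z) (hz : HasWeightsIn K z (-r) r)
    (j : ℕ) {v : 𝒞} (hv : v ∈ weightSpace K z (2 * j)) :
    ∃ w ∈ weightSpace K z 0, ladder x y ^ j * w = v := by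
  induction j generalizing v with
  | zero => exact ⟨v, by simpa using hv, by simp⟩
  | succ j ih =>
    obtain ⟨u, hu, rfl⟩ := h.exists_ladder_mul_eq hz (n := 2 * j)
      (by convert hv using 2; push_cast; ring)
    obtain ⟨w, hw, rfl⟩ := ih (by exact_mod_cast hu)
    exact ⟨w, hw, by rw [pow_succ', mul_assoc]⟩

theorem mul_eq_zero_of_even (h : IsAnticommutatorSpin x y z) (hz : HasWeightsIn K z (-r) r)
    {a : 𝒞} (ha : ∀ j, ∀ w ∈ weightSpace K z 0,
      a * (ladder x y ^ j * w) = 0 ∧ a * (ladder x (-y) ^ j * w) = 0)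
    {m : ℤ} (hm : Even m) {v : 𝒞} (hv : v ∈ weightSpace K z m) : a * v = 0 := by
  obtain ⟨k, rfl⟩ := hm
  obtain ⟨j, rfl | rfl⟩ := k.eq_nat_or_neg
  · obtain ⟨w, hw, rfl⟩ := h.exists_ladder_pow_mul_eq hz j (by rwa [two_mul])
    exact (ha j w hw).1
  · have hv' : v ∈ weightSpace K (-z) (2 * j) := by
      rwa [weightSpace_neg, two_mul, neg_add]
    obtain ⟨w, hw, rfl⟩ := h.neg.exists_ladder_pow_mul_eq (by simpa using hz.neg) j hv'
    rw [weightSpace_neg, neg_zero] at hw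
    exact (ha j w hw).2

end IsAnticommutatorSpin

end Surjectivity

section Mirror

variable {K 𝒞 : Type*} [Field K] [Ring 𝒞] [Algebra K 𝒞] {x y z v : 𝒞} {σ ρ : K}

/-- The elements of `𝒞` whose left multiplication preserves `W`. -/
def leftStabilizer (W : Submodule K 𝒞) : Subalgebra K 𝒞 where
  carrier := {a | ∀ w ∈ W, a * w ∈ W}
  mul_mem' ha hb w hw := by rw [mul_assoc]; exact ha _ (hb _ hw)
  add_mem' ha hb w hw := by rw [add_mul]; exact add_mem (ha _ hw) (hb _ hw)
  algebraMap_mem' t w hw := by rw [← Algebra.smul_def]; exact W.smul_mem t hw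

theorem mul_mem_of_mem_span {s : Set 𝒞} {W : Submodule K 𝒞} {a : 𝒞}
    (h : ∀ w ∈ s, a * w ∈ W) {w : 𝒞} (hw : w ∈ Submodule.span K s) : a * w ∈ W :=
  (Submodule.span_le.2 h : _ ≤ W.comap (LinearMap.mulLeft K a)) hw

/-- The sum, with relative sign `σ`, of the mirror images `ladder x y ^ j` and `ladder x (-y) ^ j`.
For `σ = ±1` the span of these sums is stable under even functions of the spin. -/
def mirror (σ : K) (x y : 𝒞) (j : ℕ) : 𝒞 := ladder x y ^ j + σ • ladder x (-y) ^ j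

theorem mirror_mul_mirror_zero (hσ : σ ^ 2 = 1) (ρ : K) (x y : 𝒞) :
    mirror ρ x y 1 * mirror σ x y 0 = (1 + σ) • mirror (ρ * σ) x y 1 := by
  have hρ : (1 + σ) * (ρ * σ) = (1 + σ) * ρ := by linear_combination ρ * hσ
  simp only [mirror, pow_zero, pow_one, smul_add (1 + σ), smul_smul (1 + σ), hρ]
  rw [show (1 : 𝒞) + σ • (1 : 𝒞) = (1 + σ) • (1 : 𝒞) by rw [add_smul, one_smul], mul_smul_comm,
    mul_one, smul_add, smul_smul]

theorem mirror_zero_mul (σ : K) (x y w : 𝒞) : mirror σ x y 0 * w = (1 + σ) • w := by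
  rw [mirror, pow_zero, pow_zero, add_mul, smul_mul_assoc, one_mul, add_smul, one_smul]

namespace IsAnticommutatorSpin

theorem ladder_pow_mul_mem_weightSpace (h : IsAnticommutatorSpin x y z)
    (hv : v ∈ weightSpace K z 0) (j : ℕ) : ladder x y ^ j * v ∈ weightSpace K z (2 * j) := by
  induction j with
  | zero => simpa using hv
  | succ j ih =>
    rw [pow_succ', mul_assoc]
    convert h.ladder_mul_mem_weightSpace ih using 2
    push_cast
    ring

theorem ladder_neg_pow_mul_mem_weightSpace (h : IsAnticommutatorSpin x y z)
    (hv : v ∈ weightSpace K z 0) (j : ℕ) :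
    ladder x (-y) ^ j * v ∈ weightSpace K z (-(2 * j)) := by
  rw [← weightSpace_neg]
  exact h.neg.ladder_pow_mul_mem_weightSpace (by rwa [weightSpace_neg, neg_zero]) j

theorem ladder_neg_mul_ladder_pow_succ_mul (h : IsAnticommutatorSpin x y z)
    (hv : v ∈ weightSpace K z 0) (j : ℕ) :
    ladder x (-y) * (ladder x y ^ (j + 1) * v)
      = ladderNorm K x y z (2 * j) * (ladder x y ^ j * v) := by
  have := h.ladder_neg_mul_ladder_mul (h.ladder_pow_mul_mem_weightSpace hv j)
  push_cast at this
  rw [pow_succ', mul_assoc, this]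

theorem ladder_mul_ladder_neg_pow_succ_mul (h : IsAnticommutatorSpin x y z)
    (hv : v ∈ weightSpace K z 0) (j : ℕ) :
    ladder x y * (ladder x (-y) ^ (j + 1) * v)
      = ladderNorm K x y z (2 * j) * (ladder x (-y) ^ j * v) := by
  have := h.neg.ladder_neg_mul_ladder_pow_succ_mul (K := K) (v := v)
    (by rwa [weightSpace_neg, neg_zero]) j
  rwa [neg_neg, ladderNorm_neg] at this

theorem mirror_mul_mirror_succ (h : IsAnticommutatorSpin x y z) (hρ : ρ ^ 2 = 1)
    (hv : v ∈ weightSpace K z 0) (σ : K) (j : ℕ) :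
    mirror ρ x y 1 * (mirror σ x y (j + 1) * v) = mirror (ρ * σ) x y (j + 2) * v
      + ρ • (ladderNorm K x y z (2 * j) * (mirror (ρ * σ) x y j * v)) := by
  have hE : ladder x y * (ladder x y ^ (j + 1) * v) = ladder x y ^ (j + 2) * v := by
    rw [← mul_assoc, ← pow_succ']
  have hE' : ladder x (-y) * (ladder x (-y) ^ (j + 1) * v) = ladder x (-y) ^ (j + 2) * v := by
    rw [← mul_assoc, ← pow_succ']
  simp only [mirror, pow_one, add_mul, smul_mul_assoc, mul_add, mul_smul_comm, hE, hE',
    h.ladder_neg_mul_ladder_pow_succ_mul hv, h.ladder_mul_ladder_neg_pow_succ_mul hv,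
    smul_add, smul_smul]
  rw [← mul_assoc ρ, ← sq, hρ, one_mul, mul_comm σ ρ]
  abel

theorem sq_mul_mirror (h : IsAnticommutatorSpin x y z) (hv : v ∈ weightSpace K z 0) (σ : K)
    (j : ℕ) : z ^ 2 * (mirror σ x y j * v) = ((2 * j : K) ^ 2) • (mirror σ x y j * v) := by
  have h1 := sq_mul_of_mem_weightSpace (h.ladder_pow_mul_mem_weightSpace hv j)
  have h2 := sq_mul_of_mem_weightSpace (h.ladder_neg_pow_mul_mem_weightSpace hv j)
  push_cast at h1 h2
  rw [neg_sq] at h2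
  rw [mirror, add_mul, smul_mul_assoc, mul_add, mul_smul_comm, h1, h2, smul_add, smul_comm]

end IsAnticommutatorSpin

/-- The span of the mirror sums of sign `σ` applied to `v`, with polynomials in the casimir
as coefficients. -/
def mirrorSpan (σ : K) (x y z v : 𝒞) : Submodule K 𝒞 :=
  Submodule.span K (Set.range fun ij : ℕ × ℕ => casimir x y z ^ ij.1 * (mirror σ x y ij.2 * v))

theorem mirror_mul_mem_mirrorSpan (σ : K) (x y z v : 𝒞) (j : ℕ) :
    mirror σ x y j * v ∈ mirrorSpan σ x y z v :=
  Submodule.subset_span ⟨(0, j), by simp⟩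

theorem casimir_mem_leftStabilizer_mirrorSpan (σ : K) (x y z v : 𝒞) :
    casimir x y z ∈ leftStabilizer (mirrorSpan σ x y z v) := by
  refine fun w hw => mul_mem_of_mem_span ?_ hw
  rintro _ ⟨⟨i, j⟩, rfl⟩
  exact Submodule.subset_span ⟨(i + 1, j), by simp only [pow_succ', mul_assoc]⟩

theorem mul_mem_of_mem_mirrorSpan {a : 𝒞} (hac : Commute (casimir x y z) a)
    {W : Submodule K 𝒞} (hW : casimir x y z ∈ leftStabilizer W)
    (ha : ∀ j, a * (mirror σ x y j * v) ∈ W) {w : 𝒞} (hw : w ∈ mirrorSpan σ x y z v) :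
    a * w ∈ W := by
  refine mul_mem_of_mem_span ?_ hw
  rintro _ ⟨⟨i, j⟩, rfl⟩
  rw [← mul_assoc, ← (hac.pow_left i).eq, mul_assoc]
  exact pow_mem hW i _ (ha j)

namespace IsAnticommutatorSpin

theorem commute_casimir_mirror (h : IsAnticommutatorSpin x y z) (σ : K) (j : ℕ) :
    Commute (casimir x y z) (mirror σ x y j) := by
  have h' := h.neg.commute_casimir_ladder
  rw [casimir_neg] at h'
  exact (h.commute_casimir_ladder.pow_right j).add_right ((h'.pow_right j).smul_right σ)

theorem mirror_one_mul_mem_mirrorSpan (h : IsAnticommutatorSpin x y z) (hσ : σ ^ 2 = 1)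
    (hρ : ρ ^ 2 = 1) (hv : v ∈ weightSpace K z 0) {w : 𝒞} (hw : w ∈ mirrorSpan σ x y z v) :
    mirror ρ x y 1 * w ∈ mirrorSpan (ρ * σ) x y z v := by
  have hc := casimir_mem_leftStabilizer_mirrorSpan (ρ * σ) x y z v
  refine mul_mem_of_mem_mirrorSpan (h.commute_casimir_mirror ρ 1) hc (fun j => ?_) hw
  cases j with
  | zero =>
    rw [← mul_assoc, mirror_mul_mirror_zero hσ, smul_mul_assoc]
    exact Submodule.smul_mem _ _ (mirror_mul_mem_mirrorSpan _ x y z v _)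
  | succ j =>
    rw [h.mirror_mul_mirror_succ hρ hv]
    exact add_mem (mirror_mul_mem_mirrorSpan _ x y z v _)
      (Submodule.smul_mem _ _ (ladderNorm_mem hc _ _ (mirror_mul_mem_mirrorSpan _ x y z v _)))

end IsAnticommutatorSpin

variable (K) in
/-- The algebra generated by the squares of an anticommutator spin. -/
def squareAlgebra (x y z : 𝒞) : Subalgebra K 𝒞 := Algebra.adjoin K {x ^ 2, y ^ 2, z ^ 2}

theorem sq_mem_squareAlgebra (x y z : 𝒞) :
    x ^ 2 ∈ squareAlgebra K x y z ∧ y ^ 2 ∈ squareAlgebra K x y z ∧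
      z ^ 2 ∈ squareAlgebra K x y z :=
  ⟨Algebra.subset_adjoin (by simp), Algebra.subset_adjoin (by simp),
    Algebra.subset_adjoin (by simp)⟩

theorem IsAnticommutatorSpin.commute_casimir_of_mem_squareAlgebra (h : IsAnticommutatorSpin x y z)
    {a : 𝒞} (ha : a ∈ squareAlgebra K x y z) : Commute (casimir x y z) a := by
  refine Algebra.commute_of_mem_adjoin_of_forall_mem_commute ha ?_
  rintro _ (rfl | rfl | rfl)
  exacts [h.commute_casimir_x.pow_right 2, h.commute_casimir_y.pow_right 2,
    h.commute_casimir_z.pow_right 2]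

theorem squareAlgebra_le [CharZero K] {S : Subalgebra K 𝒞} (hc : casimir x y z ∈ S)
    (hz : z ^ 2 ∈ S) (hxy : mirror (1 : K) x y 1 ∈ S) : squareAlgebra K x y z ≤ S := by
  have hδ : mirror (1 : K) x y 1 = (2 : K) • (x ^ 2 - y ^ 2) := by
    rw [mirror, pow_one, pow_one, one_smul, ladder_add_ladder_neg, two_smul, two_smul]
  have hx : x ^ 2 = (4 : K)⁻¹ • ((2 : K) • (casimir x y z - z ^ 2) + mirror (1 : K) x y 1) := by
    rw [eq_inv_smul_iff₀ (by norm_num), hδ, casimir]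
    module
  have hy : y ^ 2 = (4 : K)⁻¹ • ((2 : K) • (casimir x y z - z ^ 2) - mirror (1 : K) x y 1) := by
    rw [eq_inv_smul_iff₀ (by norm_num), hδ, casimir]
    module
  refine Algebra.adjoin_le ?_
  rintro _ (rfl | rfl | rfl)
  · exact hx ▸ S.smul_mem (add_mem (S.smul_mem (sub_mem hc hz) _) hxy) _
  · exact hy ▸ S.smul_mem (sub_mem (S.smul_mem (sub_mem hc hz) _) hxy) _
  · exact hz

theorem IsAnticommutatorSpin.squareAlgebra_le_leftStabilizer [CharZero K]
    (h : IsAnticommutatorSpin x y z) (hσ : σ ^ 2 = 1) (hv : v ∈ weightSpace K z 0) :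
    squareAlgebra K x y z ≤ leftStabilizer (mirrorSpan σ x y z v) := by
  have hc := casimir_mem_leftStabilizer_mirrorSpan σ x y z v
  refine squareAlgebra_le hc (fun w hw => ?_) (fun w hw => ?_)
  · refine mul_mem_of_mem_mirrorSpan (h.commute_casimir_z.pow_right 2) hc (fun j => ?_) hw
    rw [h.sq_mul_mirror hv]
    exact Submodule.smul_mem _ _ (mirror_mul_mem_mirrorSpan _ x y z v _)
  · simpa using h.mirror_one_mul_mem_mirrorSpan hσ (one_pow 2) hv hw

end Mirror

section Lax

variable {K 𝒞 : Type*} [Field K] [Ring 𝒞] [Algebra K 𝒞] {x y z : 𝒞}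

/-- The combination of the squares of an anticommutator spin whose intertwining relations with even
functions of `x`, `y` and `z` encode the recursion for the coefficients of the `R`-matrix. -/
def lax (α β γ : K) (x y z : 𝒞) : 𝒞 :=
  α • x ^ 2 + β • y ^ 2 + γ • z ^ 2 + (2⁻¹ : K) • (x ^ 2 * y ^ 2 - y ^ 2 * x ^ 2)

theorem lax_mem_squareAlgebra (α β γ : K) (x y z : 𝒞) :
    lax α β γ x y z ∈ squareAlgebra K x y z := by
  obtain ⟨hx, hy, hz⟩ := sq_mem_squareAlgebra (K := K) x y z
  exact add_mem (add_mem (add_mem (Subalgebra.smul_mem _ hx α) (Subalgebra.smul_mem _ hy β))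
    (Subalgebra.smul_mem _ hz γ))
    (Subalgebra.smul_mem _ (sub_mem (mul_mem hx hy) (mul_mem hy hx)) _)

namespace IsAnticommutatorSpin

theorem sq_commutator_rotate (h : IsAnticommutatorSpin x y z) :
    y ^ 2 * z ^ 2 - z ^ 2 * y ^ 2 = x ^ 2 * y ^ 2 - y ^ 2 * x ^ 2 := by
  have hc := (h.commute_casimir_y.pow_right 2).eq
  rw [casimir] at hc
  linear_combination (norm := noncomm_ring) -hc

theorem lax_rotate (h : IsAnticommutatorSpin x y z) (α β γ : K) :
    lax β γ α y z x = lax α β γ x y z := by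
  rw [lax, lax, h.sq_commutator_rotate]
  abel

theorem commute_casimir_lax (h : IsAnticommutatorSpin x y z) (α β γ : K) :
    Commute (casimir x y z) (lax α β γ x y z) := by
  have hx := h.commute_casimir_x.pow_right 2
  have hy := h.commute_casimir_y.pow_right 2
  exact (((hx.smul_right α).add_right (hy.smul_right β)).add_right
    ((h.commute_casimir_z.pow_right 2).smul_right γ)).add_right
    (((hx.mul_right hy).sub_right (hy.mul_right hx)).smul_right _)

theorem lax_mul_of_mem_weightSpace [CharZero K] (h : IsAnticommutatorSpin x y z) (α β γ : K)
    {m : ℤ} {v : 𝒞} (hv : v ∈ weightSpace K z m) :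
    lax α β γ x y z * v = ((α + β) / 2) • (casimir x y z * v)
      + ((γ - (α + β) / 2) * m ^ 2) • v
      + (((α - β) / 2 + m + 1) / 2) • (ladder x y * v)
      + (((α - β) / 2 - m + 1) / 2) • (ladder x (-y) * v) := by
  have hd : (x ^ 2 - y ^ 2) * v = (2⁻¹ : K) • (ladder x y * v + ladder x (-y) * v) := by
    rw [← add_mul, ladder_add_ladder_neg, smul_mul_assoc, ← Nat.cast_smul_eq_nsmul K]
    norm_num [smul_smul]
  have hcomm : x ^ 2 * y ^ 2 - y ^ 2 * x ^ 2
      = (2⁻¹ : K) • (z ^ 2 * (x ^ 2 - y ^ 2) - (x ^ 2 - y ^ 2) * z ^ 2) := by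
    have h₁ := h.sq_commutator_rotate
    have h₂ := h.rotate.sq_commutator_rotate
    rw [eq_inv_smul_iff₀ two_ne_zero, two_smul]
    linear_combination (norm := noncomm_ring) -2 * h₁ - h₂
  have hsum : lax α β γ x y z = ((α + β) / 2) • (casimir x y z - z ^ 2) + γ • z ^ 2
      + ((α - β) / 2) • (x ^ 2 - y ^ 2)
      + (4⁻¹ : K) • (z ^ 2 * (x ^ 2 - y ^ 2) - (x ^ 2 - y ^ 2) * z ^ 2) := by
    rw [lax, hcomm, casimir]
    module
  have hE := sq_mul_of_mem_weightSpace (h.ladder_mul_mem_weightSpace hv)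
  have hE' := sq_mul_of_mem_weightSpace (h.ladder_neg_mul_mem_weightSpace hv)
  have hzz := sq_mul_of_mem_weightSpace hv
  rw [hsum]
  generalize x ^ 2 - y ^ 2 = d at hd
  simp only [add_mul, sub_mul, smul_mul_assoc, mul_assoc, hzz, mul_smul_comm, hd, mul_add, hE, hE']
  push_cast
  module

end IsAnticommutatorSpin

end Lax

section Generation

variable {K 𝒞 : Type*} [Field K] [CharZero K] [Ring 𝒞] [Algebra K 𝒞] {x y z v : 𝒞} {r : ℕ}
  {α β γ σ : K}

namespace IsAnticommutatorSpin

theorem lax_mul_zero (h : IsAnticommutatorSpin x y z) (hv : v ∈ weightSpace K z 0) :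
    lax α β γ x y z * v = ((α + β) / 2) • (casimir x y z * v)
      + (((α - β) / 2 + 1) / 2) • (mirror (1 : K) x y 1 * v) := by
  have hm := h.lax_mul_of_mem_weightSpace α β γ hv
  push_cast at hm
  rw [hm, mirror, pow_one, pow_one, one_smul, add_mul]
  module

theorem lax_mul_mirror_succ (h : IsAnticommutatorSpin x y z) (hv : v ∈ weightSpace K z 0)
    (j : ℕ) :
    lax α β γ x y z * (mirror σ x y (j + 1) * v)
      = ((α + β) / 2) • (casimir x y z * (mirror σ x y (j + 1) * v))
      + ((γ - (α + β) / 2) * (2 * (j + 1)) ^ 2) • (mirror σ x y (j + 1) * v)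
      + (((α - β) / 2 + (2 * j + 3)) / 2) • (mirror σ x y (j + 2) * v)
      + (((α - β) / 2 - (2 * j + 1)) / 2) •
        (ladderNorm K x y z (2 * j) * (mirror σ x y j * v)) := by
  have hE : ladder x y * (ladder x y ^ (j + 1) * v) = ladder x y ^ (j + 2) * v := by
    rw [← mul_assoc, ← pow_succ']
  have hE' : ladder x (-y) * (ladder x (-y) ^ (j + 1) * v) = ladder x (-y) ^ (j + 2) * v := by
    rw [← mul_assoc, ← pow_succ']
  have hup := h.lax_mul_of_mem_weightSpace α β γ (h.ladder_pow_mul_mem_weightSpace hv (j + 1))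
  have hdown :=
    h.lax_mul_of_mem_weightSpace α β γ (h.ladder_neg_pow_mul_mem_weightSpace hv (j + 1))
  rw [hE, h.ladder_neg_mul_ladder_pow_succ_mul hv] at hup
  rw [hE', h.ladder_mul_ladder_neg_pow_succ_mul hv] at hdown
  push_cast at hup hdown
  simp only [mirror, add_mul, smul_mul_assoc, mul_add, mul_smul_comm, hup, hdown]
  module

theorem mirror_mul_eq_zero (h : IsAnticommutatorSpin x y z) (hz : HasWeightsIn K z (-r) r)
    (hv : v ∈ weightSpace K z 0) {j : ℕ} (hj : r < 2 * j) : mirror σ x y j * v = 0 := by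
  rw [mirror, add_mul, smul_mul_assoc,
    hz.eq_zero_of_notMem (by simp; omega) (h.ladder_pow_mul_mem_weightSpace hv j),
    hz.eq_zero_of_notMem (by simp; omega) (h.ladder_neg_pow_mul_mem_weightSpace hv j),
    smul_zero, add_zero]

/-- Solve for the raising term: `lax α β γ x y z` is tridiagonal on the mirror sums. -/
theorem mirror_mul_mem (h : IsAnticommutatorSpin x y z) (hz : HasWeightsIn K z (-r) r)
    (hpole : ∀ j : ℕ, 2 * j + 2 ≤ r → (α - β) / 2 + (2 * j + 1) ≠ 0) {L : Submodule K 𝒞}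
    (hc : casimir x y z ∈ leftStabilizer L) (hN : lax α β γ x y z ∈ leftStabilizer L)
    (hv : v ∈ weightSpace K z 0) (hzero : mirror σ x y 0 * v ∈ L)
    (hone : mirror σ x y 1 * v ∈ L) (j : ℕ) : mirror σ x y j * v ∈ L := by
  suffices ∀ j, mirror σ x y j * v ∈ L ∧ mirror σ x y (j + 1) * v ∈ L from (this j).1
  intro j
  induction j with
  | zero => exact ⟨hzero, hone⟩
  | succ j ih =>
    refine ⟨ih.2, ?_⟩
    by_cases hj : r < 2 * (j + 2)
    · rw [h.mirror_mul_eq_zero hz hv hj]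
      exact zero_mem L
    have hne : ((α - β) / 2 + (2 * j + 3)) / 2 ≠ 0 := by
      refine div_ne_zero ?_ two_ne_zero
      convert hpole (j + 1) (by omega) using 2
      push_cast
      ring
    have hmem := hN _ ih.2
    rw [h.lax_mul_mirror_succ hv, Submodule.add_mem_iff_left _
      (L.smul_mem _ (ladderNorm_mem hc _ _ ih.1)), Submodule.add_mem_iff_right _
      (add_mem (L.smul_mem _ (hc _ ih.2)) (L.smul_mem _ ih.2)), L.smul_mem_iff hne] at hmem
    exact hmem

theorem ladder_pow_mul_mem (h : IsAnticommutatorSpin x y z) (hz : HasWeightsIn K z (-r) r)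
    (hpole : ∀ j : ℕ, 2 * j + 2 ≤ r → (α - β) / 2 + (2 * j + 1) ≠ 0) {L : Submodule K 𝒞}
    (hc : casimir x y z ∈ leftStabilizer L) (hN : lax α β γ x y z ∈ leftStabilizer L)
    (hv : v ∈ weightSpace K z 0) (hvL : v ∈ L) (hvL' : mirror (-1 : K) x y 1 * v ∈ L) (j : ℕ) :
    ladder x y ^ j * v ∈ L ∧ ladder x (-y) ^ j * v ∈ L := by
  have hzero (σ : K) : mirror σ x y 0 * v ∈ L := mirror_zero_mul σ x y v ▸ L.smul_mem _ hvL
  have hone : mirror (1 : K) x y 1 * v ∈ L := by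
    by_cases hr : r < 2 * 1
    · rw [h.mirror_mul_eq_zero hz hv hr]
      exact zero_mem L
    have hne : ((α - β) / 2 + 1) / 2 ≠ 0 :=
      div_ne_zero (by simpa using hpole 0 (by omega)) two_ne_zero
    have hmem := hN _ hvL
    rwa [h.lax_mul_zero hv, Submodule.add_mem_iff_right _ (L.smul_mem _ (hc _ hvL)),
      L.smul_mem_iff hne] at hmem
  have hplus := h.mirror_mul_mem hz hpole hc hN hv (hzero 1) hone j
  have hminus := h.mirror_mul_mem hz hpole hc hN hv (hzero (-1)) hvL' j
  simp only [mirror, add_mul, one_smul, neg_smul, neg_mul] at hplus hminus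
  constructor
  · rw [← L.smul_mem_iff (two_ne_zero (α := K))]
    convert add_mem hplus hminus using 1
    module
  · rw [← L.smul_mem_iff (two_ne_zero (α := K))]
    convert sub_mem hplus hminus using 1
    module

theorem mul_eq_zero_of_forall_lax_pow (h : IsAnticommutatorSpin x y z)
    (hz : HasWeightsIn K z (-r) r)
    (hpole : ∀ j : ℕ, 2 * j + 2 ≤ r → (α - β) / 2 + (2 * j + 1) ≠ 0)
    {a : 𝒞} (hca : Commute (casimir x y z) a)
    (ha : ∀ k, a * (lax α β γ x y z ^ k * zeroProj K r z) = 0)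
    (ha' : ∀ k, a * (lax α β γ x y z ^ k * (mirror (-1 : K) x y 1 * zeroProj K r z)) = 0)
    {m : ℤ} (hm : Even m) (hv : v ∈ weightSpace K z m) : a * v = 0 := by
  set N := lax α β γ x y z
  let L : Submodule K 𝒞 := ⨅ k : ℕ, LinearMap.ker (LinearMap.mulLeft K (a * N ^ k))
  have hL {w : 𝒞} : w ∈ L ↔ ∀ k, a * (N ^ k * w) = 0 := by
    simp [L]
  have hN : N ∈ leftStabilizer L := fun w hw => hL.2 fun k => by
    rw [← mul_assoc (N ^ k), ← pow_succ, hL.1 hw]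
  have hc : casimir x y z ∈ leftStabilizer L := fun w hw => hL.2 fun k => by
    rw [← mul_assoc (N ^ k), ← ((h.commute_casimir_lax α β γ).pow_right k).eq, mul_assoc,
      ← mul_assoc a, ← hca.eq, mul_assoc, hL.1 hw, mul_zero]
  refine h.mul_eq_zero_of_even hz (fun j w hw => ?_) hm hv
  have hmem := h.ladder_pow_mul_mem hz hpole hc hN hz.zeroProj_mem (hL.2 ha) (hL.2 ha') j
  have hkill {b : 𝒞} (hb : b * zeroProj K r z ∈ L) : a * (b * w) = 0 := by
    have := hL.1 hb 0
    rw [pow_zero, one_mul] at this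
    rw [← zeroProj_mul_of_mem_zero r hw, ← mul_assoc b, ← mul_assoc a, this, zero_mul]
  exact ⟨hkill hmem.1, hkill hmem.2⟩

end IsAnticommutatorSpin

end Generation

section Reversal

open MulOpposite

variable {K 𝒞 : Type*} [Field K] [Ring 𝒞] [Algebra K 𝒞] {x y z : 𝒞} {τ : 𝒞 →ₐ[K] 𝒞ᵐᵒᵖ}

theorem map_aeval_eq_op (hx : τ x = op x) (p : Polynomial K) :
    τ (Polynomial.aeval x p) = op (Polynomial.aeval x p) := by
  rw [← Polynomial.aeval_algHom_apply, hx]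
  induction p using Polynomial.induction_on' with
  | add p q hp hq => simp [hp, hq]
  | monomial n t => simp [Polynomial.aeval_monomial, Algebra.commutes]

theorem map_lax_eq_op (hx : τ x = op x) (hy : τ y = op y) (hz : τ z = op z) (α β γ : K) :
    τ (lax α β γ x y z) = op (lax β α γ y x z) := by
  simp only [lax, map_add, map_sub, map_smul, map_mul, map_pow, hx, hy, hz, op_add, op_sub,
    op_smul, op_mul, op_pow]
  abel

theorem map_mirror_neg_one_eq_op (hx : τ x = op x) (hy : τ y = op y) :
    τ (mirror (-1 : K) x y 1) = op (-mirror (-1 : K) x y 1) := by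
  simp only [mirror, ladder, pow_one, map_add, map_sub, map_mul, map_neg, hx, hy,
    ← op_add, ← op_sub, ← op_mul, ← op_neg, neg_smul, one_smul]
  congr 1
  noncomm_ring

theorem IsAnticommutatorSpin.map_eq_op (h : IsAnticommutatorSpin x y z) (hx : τ x = op x)
    (hy : τ y = op y) : τ z = op z := by
  rw [← h.anticomm_xy, map_add, map_mul, map_mul, hx, hy, ← op_mul, ← op_mul, op_add, add_comm]

theorem IsAnticommutatorSpin.map_casimir_eq_op (h : IsAnticommutatorSpin x y z) (hx : τ x = op x)
    (hy : τ y = op y) : τ (casimir x y z) = op (casimir x y z) := by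
  simp only [casimir, map_add, map_pow, hx, hy, h.map_eq_op hx hy, op_add, op_pow]

end Reversal

section Sandwich

open MulOpposite

variable {K 𝒞 : Type*} [Field K] [Ring 𝒞] [Algebra K 𝒞] {x y z : 𝒞} {r : ℕ}
  {τ : 𝒞 →ₐ[K] 𝒞ᵐᵒᵖ} {σ : K}

theorem commute_zeroProj {a : 𝒞} (haz : Commute a z) : Commute a (zeroProj K r z) :=
  Algebra.commute_of_mem_adjoin_singleton_of_commute (Polynomial.aeval_mem_adjoin_singleton K z) haz

variable [CharZero K]

namespace IsAnticommutatorSpin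

theorem zeroProj_mul_mirror_succ_mul (h : IsAnticommutatorSpin x y z)
    (hz : HasWeightsIn K z (-r) r) {v : 𝒞} (hv : v ∈ weightSpace K z 0) (j : ℕ) :
    zeroProj K r z * (mirror σ x y (j + 1) * v) = 0 := by
  rw [mirror, add_mul, smul_mul_assoc, mul_add, mul_smul_comm,
    hz.zeroProj_mul_of_ne_zero (by positivity) (h.ladder_pow_mul_mem_weightSpace hv (j + 1)),
    hz.zeroProj_mul_of_ne_zero (neg_ne_zero.2 (by positivity))
      (h.ladder_neg_pow_mul_mem_weightSpace hv (j + 1)), smul_zero, add_zero]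

theorem exists_zeroProj_mul_eq (h : IsAnticommutatorSpin x y z) (hz : HasWeightsIn K z (-r) r)
    {w : 𝒞} (hw : w ∈ mirrorSpan σ x y z (zeroProj K r z)) :
    ∃ p : Polynomial K, zeroProj K r z * w
      = (1 + σ) • (Polynomial.aeval (casimir x y z) p * zeroProj K r z) := by
  set e := zeroProj K r z
  have he : e ∈ weightSpace K z 0 := hz.zeroProj_mem
  induction hw using Submodule.span_induction with
  | zero => exact ⟨0, by simp⟩
  | add a b _ _ ha hb =>
    obtain ⟨p, hp⟩ := ha
    obtain ⟨q, hq⟩ := hb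
    exact ⟨p + q, by rw [mul_add, hp, hq, map_add, add_mul, smul_add]⟩
  | smul t a _ ha =>
    obtain ⟨p, hp⟩ := ha
    exact ⟨t • p, by rw [mul_smul_comm, hp, map_smul, smul_mul_assoc, smul_comm]⟩
  | mem a ha =>
    obtain ⟨⟨i, j⟩, rfl⟩ := ha
    have hc : Commute (casimir x y z ^ i) e := (commute_zeroProj h.commute_casimir_z).pow_left i
    dsimp only
    rw [← mul_assoc, ← hc.eq, mul_assoc]
    cases j with
    | zero =>
      refine ⟨Polynomial.X ^ i, ?_⟩
      rw [mirror_zero_mul, mul_smul_comm, zeroProj_mul_of_mem_zero r he, mul_smul_comm, map_pow,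
        Polynomial.aeval_X]
    | succ j => exact ⟨0, by simp [e, h.zeroProj_mul_mirror_succ_mul hz he]⟩

theorem zeroProj_mem_mirrorSpan_one (x y z : 𝒞) :
    zeroProj K r z ∈ mirrorSpan (1 : K) x y z (zeroProj K r z) := by
  have := mirror_mul_mem_mirrorSpan (1 : K) x y z (zeroProj K r z) 0
  rwa [mirror_zero_mul, Submodule.smul_mem_iff _ (by norm_num)] at this

theorem eq_zero_of_map_eq_op_neg (h : IsAnticommutatorSpin x y z) (hx : τ x = op x)
    (hy : τ y = op y) {w : 𝒞} (hz : HasWeightsIn K z (-r) r)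
    (hw : w ∈ mirrorSpan (1 : K) x y z (zeroProj K r z))
    (hτ : τ (zeroProj K r z * w) = op (-(zeroProj K r z * w))) : zeroProj K r z * w = 0 := by
  obtain ⟨p, hp⟩ := h.exists_zeroProj_mul_eq hz hw
  have hτp := map_aeval_eq_op (h.map_casimir_eq_op hx hy) p
  have hτe : τ (zeroProj K r z) = op (zeroProj K r z) := map_aeval_eq_op (h.map_eq_op hx hy) _
  have hcomm : Commute (Polynomial.aeval (casimir x y z) p) (zeroProj K r z) :=
    commute_zeroProj (Algebra.commute_of_mem_adjoin_singleton_of_commute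
      (Polynomial.aeval_mem_adjoin_singleton K _) h.commute_casimir_z.symm).symm
  have hsymm : τ (zeroProj K r z * w) = op (zeroProj K r z * w) := by
    rw [hp, map_smul, map_mul, hτp, hτe, ← op_mul, ← hcomm.eq, op_smul]
  rw [hsymm, op_inj, eq_neg_iff_add_eq_zero, ← two_smul K] at hτ
  exact (smul_eq_zero_iff_right two_ne_zero).1 hτ

theorem zeroProj_mul_eq_zero_of_mem_mirrorSpan_neg_one (h : IsAnticommutatorSpin x y z)
    (hz : HasWeightsIn K z (-r) r) {w : 𝒞}
    (hw : w ∈ mirrorSpan (-1 : K) x y z (zeroProj K r z)) : zeroProj K r z * w = 0 := by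
  obtain ⟨p, hp⟩ := h.exists_zeroProj_mul_eq hz hw
  rw [hp, add_neg_cancel, zero_smul]

theorem zeroProj_mul_mul_zeroProj (h : IsAnticommutatorSpin x y z) (hx : τ x = op x)
    (hy : τ y = op y) (hz : HasWeightsIn K z (-r) r) {a : 𝒞} (ha : a ∈ squareAlgebra K x y z)
    (hτ : τ a = op (-a)) : zeroProj K r z * (a * zeroProj K r z) = 0 := by
  have hτe : τ (zeroProj K r z) = op (zeroProj K r z) := map_aeval_eq_op (h.map_eq_op hx hy) _
  refine h.eq_zero_of_map_eq_op_neg hx hy hz (h.squareAlgebra_le_leftStabilizer (one_pow 2)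
    hz.zeroProj_mem ha _ (zeroProj_mem_mirrorSpan_one x y z)) ?_
  simp only [map_mul, hτe, hτ, ← op_mul, mul_neg, neg_mul, mul_assoc]

end IsAnticommutatorSpin

end Sandwich

section Rigidity

open MulOpposite

variable {K 𝒞 : Type*} [Field K] [CharZero K] [Ring 𝒞] [Algebra K 𝒞] {x y z : 𝒞} {r : ℕ}
  {τ : 𝒞 →ₐ[K] 𝒞ᵐᵒᵖ} {α β γ : K}

namespace IsAnticommutatorSpin

theorem zeroProj_mul_mul_mirror_mul_zeroProj (h : IsAnticommutatorSpin x y z)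
    (hz : HasWeightsIn K z (-r) r) {a : 𝒞} (ha : a ∈ squareAlgebra K x y z) :
    zeroProj K r z * (a * (mirror (-1 : K) x y 1 * zeroProj K r z)) = 0 :=
  h.zeroProj_mul_eq_zero_of_mem_mirrorSpan_neg_one hz
    (h.squareAlgebra_le_leftStabilizer neg_one_sq hz.zeroProj_mem ha _
      (mirror_mul_mem_mirrorSpan (-1) x y z _ 1))

theorem zeroProj_mul_mirror_mul_mul_zeroProj (h : IsAnticommutatorSpin x y z)
    (hz : HasWeightsIn K z (-r) r) {a : 𝒞} (ha : a ∈ squareAlgebra K x y z) :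
    zeroProj K r z * (mirror (-1 : K) x y 1 * (a * zeroProj K r z)) = 0 := by
  refine h.zeroProj_mul_eq_zero_of_mem_mirrorSpan_neg_one hz ?_
  have := h.mirror_one_mul_mem_mirrorSpan (one_pow 2) neg_one_sq hz.zeroProj_mem
    (h.squareAlgebra_le_leftStabilizer (one_pow 2) hz.zeroProj_mem ha _
      (zeroProj_mem_mirrorSpan_one x y z))
  rwa [mul_one] at this

theorem zeroProj_mul_mirror_mul_mul_mirror_mul_zeroProj (h : IsAnticommutatorSpin x y z)
    (hx : τ x = op x) (hy : τ y = op y) (hz : HasWeightsIn K z (-r) r) {a : 𝒞}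
    (ha : a ∈ squareAlgebra K x y z) (hτ : τ a = op (-a)) :
    zeroProj K r z * (mirror (-1 : K) x y 1 * (a * (mirror (-1 : K) x y 1 * zeroProj K r z)))
      = 0 := by
  have hτe : τ (zeroProj K r z) = op (zeroProj K r z) := map_aeval_eq_op (h.map_eq_op hx hy) _
  have hmem := h.mirror_one_mul_mem_mirrorSpan neg_one_sq neg_one_sq hz.zeroProj_mem
    (h.squareAlgebra_le_leftStabilizer neg_one_sq hz.zeroProj_mem ha _
      (mirror_mul_mem_mirrorSpan (-1) x y z _ 1))
  rw [neg_one_mul, neg_neg] at hmem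
  refine h.eq_zero_of_map_eq_op_neg hx hy hz hmem ?_
  simp only [map_mul, hτe, hτ, map_mirror_neg_one_eq_op hx hy, ← op_mul, mul_neg, neg_mul,
    neg_neg, mul_assoc]

theorem eq_zero_of_forall_mul_lax_pow (h : IsAnticommutatorSpin x y z)
    (hz : HasWeightsIn K z (-r) r)
    (hpole : ∀ j : ℕ, 2 * j + 2 ≤ r → (α - β) / 2 + (2 * j + 1) ≠ 0) {a : 𝒞}
    (hca : Commute (casimir x y z) a)
    (hodd : ∀ m : ℤ, Odd m → ∀ v ∈ weightSpace K z m, a * v = 0)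
    (ha : ∀ k, a * (lax α β γ x y z ^ k * zeroProj K r z) = 0)
    (ha' : ∀ k, a * (lax α β γ x y z ^ k * (mirror (-1 : K) x y 1 * zeroProj K r z)) = 0) :
    a = 0 := by
  refine hz.ext fun m _ v hv => ?_
  rw [zero_mul]
  rcases m.even_or_odd with hm | hm
  · exact h.mul_eq_zero_of_forall_lax_pow hz hpole hca ha ha' hm hv
  · exact hodd m hm v hv

/-- For every `k` the element `d * lax α β γ x y z ^ k` is antisymmetric under the reversal `τ`,
while its compressions to the weight-zero vectors are symmetric. -/
theorem zeroProj_mul_eq_zero_of_mul_lax_eq (h : IsAnticommutatorSpin x y z)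
    (hz : HasWeightsIn K z (-r) r) (hx : τ x = op x) (hy : τ y = op y)
    (hpole : ∀ j : ℕ, 2 * j + 2 ≤ r → (α - β) / 2 + (2 * j + 1) ≠ 0) {d : 𝒞}
    (hd : d ∈ squareAlgebra K x y z) (hτ : τ d = op (-d))
    (hlax : SemiconjBy d (lax α β γ x y z) (lax β α γ y x z))
    (hodd : ∀ m : ℤ, Odd m → ∀ v ∈ weightSpace K z m, d * v = 0) :
    zeroProj K r z * d = 0 ∧ zeroProj K r z * mirror (-1 : K) x y 1 * d = 0 := by
  set N := lax α β γ x y z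
  have hmem (k : ℕ) : d * N ^ k ∈ squareAlgebra K x y z :=
    mul_mem hd (pow_mem (lax_mem_squareAlgebra α β γ x y z) k)
  have hanti (k : ℕ) : τ (d * N ^ k) = op (-(d * N ^ k)) := by
    rw [map_mul, map_pow, hτ, map_lax_eq_op hx hy (h.map_eq_op hx hy), ← op_pow, ← op_mul,
      mul_neg, (hlax.pow_right k).eq]
  have hcd := h.commute_casimir_of_mem_squareAlgebra hd
  have hce : Commute (casimir x y z) (zeroProj K r z) := commute_zeroProj h.commute_casimir_z
  have hcg := h.commute_casimir_mirror (-1 : K) 1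
  constructor
  · refine h.eq_zero_of_forall_mul_lax_pow (γ := γ) hz hpole (hce.mul_right hcd)
      (fun m hm v hv => by rw [mul_assoc, hodd m hm v hv, mul_zero]) (fun k => ?_) fun k => ?_
    · rw [mul_assoc, ← mul_assoc d]
      exact h.zeroProj_mul_mul_zeroProj hx hy hz (hmem k) (hanti k)
    · rw [mul_assoc, ← mul_assoc d]
      exact h.zeroProj_mul_mul_mirror_mul_zeroProj hz (hmem k)
  · refine h.eq_zero_of_forall_mul_lax_pow (γ := γ) hz hpole ((hce.mul_right hcg).mul_right hcd)
      (fun m hm v hv => by rw [mul_assoc, hodd m hm v hv, mul_zero]) (fun k => ?_) fun k => ?_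
    · rw [mul_assoc, mul_assoc, ← mul_assoc d]
      exact h.zeroProj_mul_mirror_mul_mul_zeroProj hz (hmem k)
    · rw [mul_assoc, mul_assoc, ← mul_assoc d]
      exact h.zeroProj_mul_mirror_mul_mul_mirror_mul_zeroProj hx hy hz (hmem k) (hanti k)

theorem eq_zero_of_mul_lax_eq (h : IsAnticommutatorSpin x y z) (hz : HasWeightsIn K z (-r) r)
    (hx : τ x = op x) (hy : τ y = op y)
    (hpole : ∀ j : ℕ, 2 * j + 2 ≤ r → (α - β) / 2 + (2 * j + 1) ≠ 0) {d : 𝒞}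
    (hd : d ∈ squareAlgebra K x y z) (hτ : τ d = op (-d))
    (hlax : SemiconjBy d (lax α β γ x y z) (lax β α γ y x z))
    (hodd : ∀ m : ℤ, Odd m → ∀ v ∈ weightSpace K z m, d * v = 0) : d = 0 := by
  obtain ⟨hed, hegd⟩ := h.zeroProj_mul_eq_zero_of_mul_lax_eq hz hx hy hpole hd hτ hlax hodd
  have hτe : τ (zeroProj K r z) = op (zeroProj K r z) := map_aeval_eq_op (h.map_eq_op hx hy) _
  have hde : d * zeroProj K r z = 0 := by
    simpa only [map_mul, hτe, hτ, ← op_mul, map_zero, op_eq_zero_iff, neg_mul, neg_eq_zero]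
      using congr_arg τ hed
  have hdge : d * (mirror (-1 : K) x y 1 * zeroProj K r z) = 0 := by
    simpa only [map_mul, hτe, hτ, map_mirror_neg_one_eq_op hx hy, ← op_mul, map_zero,
      op_eq_zero_iff, neg_mul, mul_neg, neg_neg] using congr_arg τ hegd
  refine h.eq_zero_of_forall_mul_lax_pow (γ := γ) hz hpole
    (h.commute_casimir_of_mem_squareAlgebra hd) hodd (fun k => ?_) fun k => ?_
  · rw [← mul_assoc, (hlax.pow_right k).eq, mul_assoc, hde, mul_zero]
  · rw [← mul_assoc, (hlax.pow_right k).eq, mul_assoc, hdge, mul_zero]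

end IsAnticommutatorSpin

end Rigidity

section RMatrix

open MulOpposite

variable {K 𝒞 : Type*} [Field K] [Ring 𝒞] [Algebra K 𝒞] {x y z F G H : 𝒞} {r : ℕ}
  {u w : K} {τ : 𝒞 →ₐ[K] 𝒞ᵐᵒᵖ}

/-- The coefficient of the `R`-matrix with spectral parameter `u` on the weights `±m`. It solves
the recursion `(u + m + 1) * f (m + 2) = (u - m - 1) * f m`. -/
def rWeight (u : K) (m : ℤ) : K :=
  if Even m then
    ∏ k ∈ Finset.range (m.natAbs / 2), (u - (2 * k + 1)) / (u + (2 * k + 1))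
  else 0

theorem rWeight_of_odd {m : ℤ} (hm : Odd m) (u : K) : rWeight u m = 0 :=
  if_neg (Int.not_even_iff_odd.2 hm)

theorem rWeight_neg (u : K) (m : ℤ) : rWeight u (-m) = rWeight u m := by
  simp [rWeight]

theorem rWeight_natAbs (u : K) (m : ℤ) : rWeight u m.natAbs = rWeight u m := by
  simp only [rWeight, Int.natCast_natAbs, even_abs, Int.natAbs_abs]

theorem rWeight_two_mul_add_two (u : K) (n : ℕ) :
    rWeight u (2 * n + 2) = rWeight u (2 * n) * ((u - (2 * n + 1)) / (u + (2 * n + 1))) := by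
  have h1 : (2 * (n : ℤ) + 2).natAbs / 2 = n + 1 := by omega
  have h2 : (2 * (n : ℤ)).natAbs / 2 = n := by omega
  rw [rWeight, rWeight, if_pos (by simp [parity_simps]), if_pos (by simp), h1, h2,
    Finset.prod_range_succ]

theorem rWeight_recursion (hu : ∀ j : ℕ, 2 * j + 2 ≤ r → u + (2 * j + 1) ≠ 0) {m : ℤ}
    (hm : -r ≤ m) (hm' : m + 2 ≤ r) :
    (u + m + 1) * rWeight u (m + 2) = (u - m - 1) * rWeight u m := by
  have hnat (n : ℕ) (hn : 2 * n + 2 ≤ r) :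
      (u + 2 * n + 1) * rWeight u (2 * n + 2) = (u - 2 * n - 1) * rWeight u (2 * n) := by
    have := hu n hn
    rw [rWeight_two_mul_add_two, add_assoc, mul_left_comm, mul_div_cancel₀ _ this]
    ring
  rcases m.even_or_odd' with ⟨k, rfl | rfl⟩
  · obtain ⟨n, rfl | rfl⟩ := k.eq_nat_or_neg
    · have := hnat n (by omega)
      push_cast
      exact this
    · obtain _ | n := n
      · simpa using hnat 0 (by omega)
      have := hnat n (by omega)
      have h1 : 2 * -((n + 1 : ℕ) : ℤ) + 2 = -(2 * n) := by push_cast; ring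
      have h2 : 2 * -((n + 1 : ℕ) : ℤ) = -(2 * n + 2) := by push_cast; ring
      rw [h1, h2, rWeight_neg, rWeight_neg]
      push_cast
      linear_combination -this
  · rw [rWeight_of_odd ⟨k + 1, by ring⟩, rWeight_of_odd ⟨k, rfl⟩, mul_zero, mul_zero]

/-- `F` is a function of `x ^ 2` whose values on the weights of `x` are the coefficients of the
`R`-matrix with spectral parameter `u`. -/
structure IsRMatrix (u : K) (x F : 𝒞) : Prop where
  mem_adjoin : F ∈ Algebra.adjoin K {x ^ 2}
  mul_eq : ∀ m, ∀ v ∈ weightSpace K x m, F * v = rWeight u m • v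

theorem IsRMatrix.map_eq_op (hF : IsRMatrix u x F) (hx : τ x = op x) : τ F = op F := by
  obtain ⟨p, rfl⟩ := Algebra.adjoin_singleton_eq_range_aeval K (x ^ 2) ▸ hF.mem_adjoin
  exact map_aeval_eq_op (by rw [map_pow, hx, op_pow]) p

variable [CharZero K]

theorem IsRMatrix.semiconjBy_lax (hF : IsRMatrix u z F) (h : IsAnticommutatorSpin x y z)
    (hz : HasWeightsIn K z (-r) r) (hu : ∀ j : ℕ, 2 * j + 2 ≤ r → u + (2 * j + 1) ≠ 0)
    {α β : K} (hαβ : (α - β) / 2 = u) (γ : K) :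
    SemiconjBy F (lax α β γ x y z) (lax β α γ y x z) := by
  refine hz.ext fun m hm v hv => ?_
  have hE := h.ladder_mul_mem_weightSpace hv
  have hE' := h.ladder_neg_mul_mem_weightSpace hv
  have hc := mul_mem_weightSpace_of_commute h.commute_casimir_z hv
  have hup : ((u + m + 1) * rWeight u (m + 2)) • (ladder x y * v)
      = ((u - m - 1) * rWeight u m) • (ladder x y * v) := by
    by_cases hm' : m + 2 ≤ r
    · rw [rWeight_recursion hu hm.1 hm']
    · rw [hz.eq_zero_of_notMem (fun h => hm' h.2) hE, smul_zero, smul_zero]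
  have hdown : ((u - m + 1) * rWeight u (m - 2)) • (ladder x (-y) * v)
      = ((u + m - 1) * rWeight u m) • (ladder x (-y) * v) := by
    by_cases hm' : -r ≤ m - 2
    · have := rWeight_recursion hu hm' (by simpa using hm.2)
      push_cast [sub_add_cancel] at this
      congr 1
      linear_combination -this
    · rw [hz.eq_zero_of_notMem (fun h => hm' h.1) hE', smul_zero, smul_zero]
  have hswap : ladder y x = -ladder x y := by rw [ladder, ladder]; noncomm_ring
  have hswap' : ladder y (-x) = -ladder x (-y) := by rw [ladder, ladder]; noncomm_ring
  have hcas : casimir y x z = casimir x y z := by rw [casimir, casimir, add_comm (y ^ 2)]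
  have hβα : (β - α) / 2 = -u := by rw [← hαβ]; ring
  rw [mul_assoc, mul_assoc, hF.mul_eq m v hv, h.lax_mul_of_mem_weightSpace α β γ hv, mul_smul_comm,
    h.swap.lax_mul_of_mem_weightSpace β α γ hv, hcas, hswap, hswap', hαβ, hβα]
  simp only [mul_add, mul_smul_comm, neg_mul, hF.mul_eq m v hv, hF.mul_eq _ _ hE, hF.mul_eq _ _ hE',
    hF.mul_eq _ _ hc]
  linear_combination (norm := module) (2⁻¹ : K) • hup + (2⁻¹ : K) • hdown

theorem IsAnticommutatorSpin.mul_mul_eq_zero_of_odd (h : IsAnticommutatorSpin x y z) {a b v : 𝒞}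
    (hb : ∀ m : ℤ, Odd m → ∀ w ∈ weightSpace K z m, b * w = 0)
    (ha : a ∈ squareAlgebra K x y z) {m : ℤ} (hm : Odd m) (hv : v ∈ weightSpace K z m) :
    b * (a * v) = 0 := by
  let W : Submodule K 𝒞 := ⨆ k : {k : ℤ // Odd k}, weightSpace K z k
  have hW {k : ℤ} (hk : Odd k) : weightSpace K z k ≤ W :=
    le_iSup (fun k : {k : ℤ // Odd k} => weightSpace K z k) ⟨k, hk⟩
  have stabilizes {c : 𝒞} (hc : ∀ k : ℤ, Odd k → ∀ w ∈ weightSpace K z k, c * w ∈ W) :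
      c ∈ leftStabilizer W := by
    have : W ≤ W.comap (LinearMap.mulLeft K c) := iSup_le fun k => hc k k.2
    exact this
  have hbW : W ≤ LinearMap.ker (LinearMap.mulLeft K b) := iSup_le fun k => hb k k.2
  refine hbW (squareAlgebra_le (S := leftStabilizer W) (stabilizes fun k hk w hw => ?_)
    (stabilizes fun k hk w hw => ?_) (stabilizes fun k hk w hw => ?_) ha v (hW hm hv))
  · exact hW hk (mul_mem_weightSpace_of_commute h.commute_casimir_z hw)
  · exact hW hk (mul_mem_weightSpace_of_commute (Commute.pow_self z 2) hw)
  · rw [mirror, pow_one, pow_one, one_smul, add_mul]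
    exact add_mem (hW (hk.add_even even_two) (h.ladder_mul_mem_weightSpace hw))
      (hW (hk.sub_even even_two) (h.ladder_neg_mul_mem_weightSpace hw))

theorem IsRMatrix.yangBaxter (hF : IsRMatrix u x F) (hG : IsRMatrix (u + w) y G)
    (hH : IsRMatrix w z H) (h : IsAnticommutatorSpin x y z)
    (hxr : HasWeightsIn K x (-r) r) (hyr : HasWeightsIn K y (-r) r)
    (hzr : HasWeightsIn K z (-r) r)
    (hx : τ x = op x) (hy : τ y = op y)
    (hu : ∀ j : ℕ, 2 * j + 2 ≤ r → u + (2 * j + 1) ≠ 0)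
    (hw : ∀ j : ℕ, 2 * j + 2 ≤ r → w + (2 * j + 1) ≠ 0)
    (huw : ∀ j : ℕ, 2 * j + 2 ≤ r → u + w + (2 * j + 1) ≠ 0) :
    F * G * H = H * G * F := by
  obtain ⟨hx2, hy2, hz2⟩ := sq_mem_squareAlgebra (K := K) x y z
  have mem {a b : 𝒞} (hb : b ^ 2 ∈ squareAlgebra K x y z) (ha : a ∈ Algebra.adjoin K {b ^ 2}) :
      a ∈ squareAlgebra K x y z := Algebra.adjoin_singleton_le hb ha
  have hFm := mem hx2 hF.mem_adjoin
  have hGm := mem hy2 hG.mem_adjoin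
  have hHm := mem hz2 hH.mem_adjoin
  have hHN := hH.semiconjBy_lax h hzr hw (show (2 * (u + w) - 2 * u) / 2 = w by ring) 0
  have hGN := hG.semiconjBy_lax h.swap.rotate hyr huw (show (2 * (u + w) - 0) / 2 = u + w by ring)
    (2 * u)
  have hFN := hF.semiconjBy_lax h.rotate hxr hu (show (2 * u - 0) / 2 = u by ring) (2 * (u + w))
  rw [h.swap.lax_rotate, ← h.rotate.rotate.lax_rotate] at hGN
  rw [h.lax_rotate, ← h.swap.rotate.rotate.lax_rotate] at hFN
  have hodd (m : ℤ) (hm : Odd m) (v : 𝒞) (hv : v ∈ weightSpace K z m) : H * v = 0 := by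
    rw [hH.mul_eq m v hv, rWeight_of_odd hm, zero_smul]
  refine sub_eq_zero.1 (h.eq_zero_of_mul_lax_eq hzr hx hy
    (d := F * G * H - H * G * F) (α := 2 * (u + w)) (β := 2 * u) (γ := 0) ?_
    (sub_mem (mul_mem (mul_mem hFm hGm) hHm) (mul_mem (mul_mem hHm hGm) hFm)) ?_
    (((hFN.mul_left hGN).mul_left hHN).sub_left ((hHN.mul_left hGN).mul_left hFN)) ?_)
  · simpa [← mul_sub] using hw
  · simp only [map_sub, map_mul, hF.map_eq_op hx, hG.map_eq_op hy,
      hH.map_eq_op (h.map_eq_op hx hy), ← op_mul, ← op_sub, neg_sub, mul_assoc]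
  · intro m hm v hv
    rw [sub_mul, mul_assoc, hodd m hm v hv, mul_zero, mul_assoc, mul_assoc, ← mul_assoc G,
      h.mul_mul_eq_zero_of_odd hodd (mul_mem hGm hFm) hm hv, sub_zero]

end RMatrix

section Involutions

variable {K 𝒞 ι : Type*} [Field K] [Ring 𝒞] [Algebra K 𝒞]

theorem isIdempotentElem_inv_two_smul_one_add [NeZero (2 : K)] {t : 𝒞} (ht : t * t = 1) :
    IsIdempotentElem ((2⁻¹ : K) • (1 + t)) := by
  have h : (1 + t) * (1 + t) = (2 : K) • (1 + t) := by
    simp only [add_mul, mul_add, one_mul, mul_one, ht, two_smul]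
    abel
  rw [IsIdempotentElem, smul_mul_smul_comm, h, smul_smul, mul_assoc, inv_mul_cancel₀ two_ne_zero,
    mul_one]

theorem hasWeightsIn_inv_two_smul_sum [CharZero K] [Fintype ι] {T : ι → 𝒞}
    (hT : ∀ j, T j * T j = 1) (hcomm : ∀ j k, Commute (T j) (T k)) {r : ℕ}
    (hr : Fintype.card ι = 2 * r) : HasWeightsIn K ((2⁻¹ : K) • ∑ j, T j) (-r) r := by
  have partial_sum (s : Finset ι) :
      HasWeightsIn K ((-r : ℤ) + ∑ j ∈ s, (2⁻¹ : K) • (1 + T j)) (-r) (-r + s.card) := by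
    induction s using Finset.cons_induction with
    | empty => simpa using hasWeightsIn_intCast (K := K) (𝒞 := 𝒞) (-r)
    | cons a s ha ih =>
      rw [Finset.sum_cons, add_comm (_ • _), ← add_assoc, Finset.card_cons, Nat.cast_succ,
        ← add_assoc]
      refine ih.add_of_isIdempotentElem (isIdempotentElem_inv_two_smul_one_add (hT a)) ?_
      refine (Int.cast_commute _ _).symm.add_right (Commute.sum_right _ _ _ fun j _ => ?_)
      exact ((Commute.one_left _).add_left ((Commute.one_right _).add_right (hcomm a j))).smul_left
        _ |>.smul_right _
  have h := partial_sum Finset.univ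
  have hsum : ((-r : ℤ) : 𝒞) + ∑ j, (2⁻¹ : K) • (1 + T j) = (2⁻¹ : K) • ∑ j, T j := by
    rw [← Finset.smul_sum, Finset.sum_add_distrib, Finset.sum_const, Finset.card_univ, hr, smul_add,
      ← Nat.cast_smul_eq_nsmul K, smul_smul, Nat.cast_mul, Nat.cast_ofNat,
      inv_mul_cancel_left₀ two_ne_zero, Nat.cast_smul_eq_nsmul, nsmul_one]
    simp
  rw [Finset.card_univ, hr, hsum] at h
  convert h using 1
  push_cast
  ring

theorem inv_two_smul_sum_anticomm [NeZero (2 : K)] [Fintype ι] [DecidableEq ι] {A B C : ι → 𝒞}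
    (h : ∀ j k, A j * B k + B k * A j = if j = k then 2 * C j else 0) :
    ((2⁻¹ : K) • ∑ j, A j) * ((2⁻¹ : K) • ∑ j, B j)
      + ((2⁻¹ : K) • ∑ j, B j) * ((2⁻¹ : K) • ∑ j, A j) = (2⁻¹ : K) • ∑ j, C j := by
  have hsum : (∑ j, A j) * ∑ j, B j + (∑ j, B j) * ∑ j, A j = (2 : K) • ∑ j, C j := by
    rw [Finset.sum_mul_sum, Finset.sum_mul_sum, Finset.sum_comm (f := fun i j => B i * A j),
      ← Finset.sum_add_distrib, two_smul, ← two_mul, Finset.mul_sum]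
    simp only [← Finset.sum_add_distrib, h, Finset.sum_ite_eq, Finset.mem_univ, if_true]
  rw [smul_mul_smul_comm, smul_mul_smul_comm, ← smul_add, hsum, smul_smul, mul_assoc,
    inv_mul_cancel₀ two_ne_zero, mul_one]

end Involutions

section Clifford

variable {r : ℕ}

theorem Γgen_mul_self (i : Fin (2 * r)) : Γgen r i * Γgen r i = 1 := by
  have h : Qf r (Pi.single i 1) = 1 := by
    simp [Qf, QuadraticMap.weightedSumSquares_apply, Pi.single_apply]
  rw [Γgen, CliffordAlgebra.ι_sq_scalar, h, map_one]

theorem Γgen_anticomm {i j : Fin (2 * r)} (h : i ≠ j) :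
    Γgen r i * Γgen r j = -(Γgen r j * Γgen r i) := by
  have hQ : QuadraticMap.polar (Qf r) (Pi.single i 1) (Pi.single j 1) = 0 := by
    simp [QuadraticMap.polar, Qf, QuadraticMap.weightedSumSquares_apply, Pi.single_apply,
      mul_add, Finset.sum_add_distrib, h, h.symm]
  rw [eq_neg_iff_add_eq_zero, Γgen, Γgen, CliffordAlgebra.ι_mul_ι_add_swap, hQ, map_zero]

theorem prod_map_Γgen_mul (l : List (Fin (2 * r))) (i : Fin (2 * r)) :
    (l.map (Γgen r)).prod * Γgen r i
      = (-1 : ℂ) ^ (l.length + l.count i) • (Γgen r i * (l.map (Γgen r)).prod) := by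
  induction l with
  | nil => simp
  | cons a l ih =>
    rw [List.map_cons, List.prod_cons, mul_assoc, ih, mul_smul_comm, ← mul_assoc, ← mul_assoc]
    by_cases h : a = i
    · subst h
      rw [List.length_cons, List.count_cons_self]
      congr 1
      ring
    · rw [Γgen_anticomm h, List.length_cons, List.count_cons_of_ne h, neg_mul, smul_neg,
        ← neg_smul]
      congr 1
      ring

theorem Γtop_anticomm (i : Fin (2 * r)) : Γtop r * Γgen r i = -(Γgen r i * Γtop r) := by
  have h := prod_map_Γgen_mul (List.finRange (2 * r)) i
  rw [List.length_finRange, List.count_eq_one_of_mem (List.nodup_finRange _) (List.mem_finRange i),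
    pow_add, pow_mul] at h
  rw [Γtop, List.ofFn_eq_map, smul_mul_assoc, h]
  simp

/-- The commuting involutions `Γ_j ⊗ Γ_j`. -/
def ΓΓ (r : ℕ) (j : Fin (2 * r)) : Cl r ⊗[ℂ] Cl r := Γgen r j ⊗ₜ[ℂ] Γgen r j

theorem ΓΓ_mul_self (j : Fin (2 * r)) : ΓΓ r j * ΓΓ r j = 1 := by
  simp [ΓΓ, Γgen_mul_self, Algebra.TensorProduct.one_def]

theorem commute_ΓΓ (j k : Fin (2 * r)) : Commute (ΓΓ r j) (ΓΓ r k) := by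
  by_cases h : j = k
  · rw [h]
  · simp [commute_iff_eq, ΓΓ, Γgen_anticomm h, TensorProduct.tmul_neg, TensorProduct.neg_tmul]

/-- `½ I₁ = ½ ∑ Γ_j ⊗ Γ_j`. Its eigenvalues are integers in `[-r, r]`, and the split
Casimir element is an affine function of its square. -/
def halfI (r : ℕ) : Cl r ⊗[ℂ] Cl r := (2⁻¹ : ℂ) • ∑ j, ΓΓ r j

theorem hasWeightsIn_map_halfI {𝒟 : Type*} [Ring 𝒟] [Algebra ℂ 𝒟]
    (f : Cl r ⊗[ℂ] Cl r →ₐ[ℂ] 𝒟) : HasWeightsIn ℂ (f (halfI r)) (-r) r := by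
  rw [halfI, map_smul, map_sum]
  exact hasWeightsIn_inv_two_smul_sum (fun j => by rw [← map_mul, ΓΓ_mul_self, map_one])
    (fun j k => (commute_ΓΓ j k).map f) (Fintype.card_fin _)

theorem Γbr_two (i j : Fin (2 * r)) :
    Γbr r 2 ![i, j] = if i = j then 0 else Γgen r i * Γgen r j := by
  have huniv : (Finset.univ : Finset (Equiv.Perm (Fin 2))) = {1, Equiv.swap 0 1} := by decide
  rw [Γbr, huniv, Finset.sum_pair (by decide)]
  split_ifs with h
  · subst h
    simp [List.ofFn_succ, Γgen_mul_self]
  · simp [List.ofFn_succ, Γgen_anticomm (Ne.symm h), ← two_smul ℂ]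

theorem Ik_two (r : ℕ) : Ik r 2 = (4 : ℂ) • halfI r ^ 2 - (2 * (r : ℂ)) • 1 := by
  have hterm (i j : Fin (2 * r)) : Γbr r 2 ![i, j] ⊗ₜ[ℂ] Γbr r 2 ![i, j]
      = ΓΓ r i * ΓΓ r j - if i = j then (1 : Cl r ⊗[ℂ] Cl r) else 0 := by
    rw [Γbr_two]
    split_ifs with h
    · subst h
      simp [ΓΓ_mul_self]
    · simp [ΓΓ]
  rw [Ik, ← (finTwoArrowEquiv (Fin (2 * r))).symm.sum_comp, Fintype.sum_prod_type, halfI, smul_pow,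
    smul_smul, sq (∑ j, _), Finset.sum_mul_sum]
  simp only [finTwoArrowEquiv_symm_apply, hterm, Finset.sum_sub_distrib, Finset.sum_ite_eq,
    Finset.mem_univ, if_true, Finset.sum_const, Finset.card_univ, Fintype.card_fin]
  rw [← Nat.cast_smul_eq_nsmul ℂ]
  norm_num

theorem sC_eq (r : ℕ) : sC r = (16 * ((r : ℂ) - 1))⁻¹ • ((r : ℂ) • 1 - (2 : ℂ) • halfI r ^ 2) := by
  have h : (16 * (2 * (r : ℂ) - 2))⁻¹ = 2⁻¹ * (16 * ((r : ℂ) - 1))⁻¹ := by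
    rw [← mul_inv]
    ring
  rw [sC, Ik_two, h]
  module

theorem sC_mem_adjoin (r : ℕ) : sC r ∈ Algebra.adjoin ℂ {halfI r ^ 2} := by
  rw [sC_eq]
  exact Subalgebra.smul_mem _ (sub_mem (Subalgebra.smul_mem _ (one_mem _) _)
    (Subalgebra.smul_mem _ (Algebra.self_mem_adjoin_singleton _ _) _)) _

theorem map_sC_mul {𝒟 : Type*} [Ring 𝒟] [Algebra ℂ 𝒟] (f : Cl r ⊗[ℂ] Cl r →ₐ[ℂ] 𝒟) {m : ℤ}
    (hm : m.natAbs ≤ r) {v : 𝒟} (hv : v ∈ weightSpace ℂ (f (halfI r)) m) :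
    f (sC r) * v = cEv r (r - m.natAbs) • v := by
  have hm2 : ((m.natAbs : ℕ) : ℂ) ^ 2 = (m : ℂ) ^ 2 := by
    rw [← Int.cast_natCast, ← Int.cast_pow, Int.natAbs_sq, Int.cast_pow]
  have hc : cEv r (r - m.natAbs) = (16 * ((r : ℂ) - 1))⁻¹ * (r - 2 * (m : ℂ) ^ 2) := by
    rw [cEv, Nat.cast_sub hm, ← hm2]
    ring
  rw [sC_eq, map_smul, map_sub, map_smul, map_smul, map_one, map_pow, smul_mul_assoc, sub_mul,
    smul_mul_assoc, smul_mul_assoc, sq_mul_of_mem_weightSpace hv, hc, one_mul]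
  module

theorem injOn_cEv (hr : 2 ≤ r) : Set.InjOn (cEv r) (Finset.range (r + 1)) := by
  intro k hk j hj h
  rw [Finset.coe_range, Set.mem_Iio] at hk hj
  have hr' : (r : ℂ) - 1 ≠ 0 := sub_ne_zero.2 (by exact_mod_cast (by omega : r ≠ 1))
  rw [cEv, cEv, div_left_inj' (mul_ne_zero (by norm_num) hr'), sub_left_inj] at h
  have hkj : ((k : ℂ) - j) * (2 * r - (k + j)) = 0 := by linear_combination h / 2
  rcases mul_eq_zero.1 hkj with h | h
  · exact_mod_cast sub_eq_zero.1 h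
  · have : 2 * r = k + j := by exact_mod_cast sub_eq_zero.1 h
    omega

theorem Pk_eq_aeval (r k : ℕ) :
    Pk r k = Polynomial.aeval (sC r) (Lagrange.basis (Finset.range (r + 1)) (cEv r) k) := by
  have hset : (Finset.range (r + 1)).erase k
      = ((List.range (r + 1)).filter fun j => j ≠ k).toFinset := by
    ext j
    simp [and_comm]
  rw [Lagrange.basis, hset, List.prod_toFinset _ (List.nodup_range.filter _), map_list_prod,
    List.map_map, Pk]
  congr 2
  funext j
  simp [Lagrange.basisDivisor, Algebra.smul_def]

/-- The `R`-matrix before the chirality projection. -/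
def unprojectedRmat (r : ℕ) (u : ℂ) : Cl r ⊗[ℂ] Cl r :=
  Polynomial.aeval (sC r) (Lagrange.interpolate (Finset.range (r + 1)) (cEv r)
    fun k => rWeight u ((r - k : ℕ) : ℤ))

theorem unprojectedRmat_eq_sum (r : ℕ) (u : ℂ) :
    unprojectedRmat r u = ∑ k ∈ Finset.range (r / 2 + 1),
      (∏ m ∈ Finset.range k, (u - (2 * (m : ℂ) + 1)) / (u + (2 * (m : ℂ) + 1))) •
        Pk r (r - 2 * k) := by
  simp only [unprojectedRmat, Lagrange.interpolate_apply, map_sum, map_mul, Polynomial.aeval_C,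
    ← Algebra.smul_def, ← Pk_eq_aeval]
  symm
  refine Finset.sum_of_injOn (fun k => r - 2 * k) ?_ ?_ ?_ ?_
  · intro k hk j hj h
    simp only [Finset.coe_range, Set.mem_Iio] at hk hj h
    omega
  · intro k hk
    simp only [Finset.coe_range, Set.mem_Iio] at hk ⊢
    omega
  · intro j hj hj'
    have hodd : Odd (r - j) := by
      rw [← Nat.not_even_iff_odd]
      rintro ⟨k, hk⟩
      rw [Finset.mem_range] at hj
      exact hj' ⟨k, by simp only [Finset.coe_range, Set.mem_Iio]; omega, by dsimp only; omega⟩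
    rw [rWeight_of_odd (by exact_mod_cast hodd), zero_smul]
  · intro k hk
    rw [Finset.mem_range] at hk
    have h : r - (r - 2 * k) = 2 * k := by omega
    have h' : ((2 * k : ℕ) : ℤ).natAbs / 2 = k := by omega
    simp only [rWeight, h, h', Int.even_coe_nat, even_two_mul, if_true]

theorem Rmat_eq (r : ℕ) (ε u : ℂ) : Rmat r ε u = ppCh r ε ε * unprojectedRmat r u := by
  simp [Rmat, unprojectedRmat_eq_sum, Finset.mul_sum]

theorem unprojectedRmat_mem_adjoin (r : ℕ) (u : ℂ) :
    unprojectedRmat r u ∈ Algebra.adjoin ℂ {halfI r ^ 2} :=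
  Algebra.adjoin_singleton_le (sC_mem_adjoin r) (Polynomial.aeval_mem_adjoin_singleton ℂ _)

theorem isRMatrix_map_unprojectedRmat {𝒟 : Type*} [Ring 𝒟] [Algebra ℂ 𝒟] (hr : 2 ≤ r)
    (f : Cl r ⊗[ℂ] Cl r →ₐ[ℂ] 𝒟) (u : ℂ) :
    IsRMatrix u (f (halfI r)) (f (unprojectedRmat r u)) where
  mem_adjoin := by
    have := Subalgebra.mem_map.2 ⟨_, unprojectedRmat_mem_adjoin r u, congr_arg f rfl⟩
    rwa [AlgHom.map_adjoin, Set.image_singleton, map_pow] at this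
  mul_eq m v hv := by
    by_cases hm : m ∈ Set.Icc (-r : ℤ) r
    · have hm' : m.natAbs ≤ r := by
        obtain ⟨h, h'⟩ := hm
        omega
      rw [unprojectedRmat, ← Polynomial.aeval_algHom_apply,
        aeval_mul_of_mul_eq_smul (map_sC_mul f hm' hv),
        Lagrange.eval_interpolate_at_node _ (injOn_cEv hr) (by simp), Nat.sub_sub_self hm',
        rWeight_natAbs]
    · rw [(hasWeightsIn_map_halfI f).eq_zero_of_notMem hm hv, mul_zero, smul_zero]

theorem commute_of_mem_adjoin_sq {K 𝒞 : Type*} [CommRing K] [Ring 𝒞] [Algebra K 𝒞] {a x b : 𝒞}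
    (h : SemiconjBy a x (-x)) (hb : b ∈ Algebra.adjoin K {x ^ 2}) : Commute a b :=
  Algebra.commute_of_mem_adjoin_singleton_of_commute hb (neg_sq x ▸ h.pow_right 2)

theorem semiconjBy_Γtop_tmul_one (r : ℕ) :
    SemiconjBy (Γtop r ⊗ₜ[ℂ] 1) (halfI r) (-halfI r) := by
  simp [SemiconjBy, halfI, ΓΓ, Finset.mul_sum, Finset.sum_mul, Γtop_anticomm,
    TensorProduct.neg_tmul]

theorem semiconjBy_one_tmul_Γtop (r : ℕ) :
    SemiconjBy (1 ⊗ₜ[ℂ] Γtop r) (halfI r) (-halfI r) := by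
  simp [SemiconjBy, halfI, ΓΓ, Finset.mul_sum, Finset.sum_mul, Γtop_anticomm,
    TensorProduct.tmul_neg]

theorem commute_map_pCh {A : Type*} [Ring A] [Algebra ℂ A] (f : Cl r →ₐ[ℂ] A) (ε : ℂ) {y : A}
    (h : Commute (f (Γtop r)) y) : Commute (f (pCh r ε)) y := by
  rw [pCh, map_smul, map_add, map_one, map_smul]
  exact ((Commute.one_left y).add_left (h.smul_left ε)).smul_left _

theorem commute_pCh_tmul_one (ε u : ℂ) :
    Commute (pCh r ε ⊗ₜ[ℂ] 1) (unprojectedRmat r u) :=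
  commute_map_pCh Algebra.TensorProduct.includeLeft ε
    (commute_of_mem_adjoin_sq (semiconjBy_Γtop_tmul_one r) (unprojectedRmat_mem_adjoin r u))

theorem commute_one_tmul_pCh (ε u : ℂ) :
    Commute (1 ⊗ₜ[ℂ] pCh r ε) (unprojectedRmat r u) :=
  commute_map_pCh (Algebra.TensorProduct.includeRight : Cl r →ₐ[ℂ] Cl r ⊗[ℂ] Cl r) ε
    (commute_of_mem_adjoin_sq (semiconjBy_one_tmul_Γtop r) (unprojectedRmat_mem_adjoin r u))

end Clifford

section TensorCube

variable {K A : Type*} [CommRing K] [Ring A] [Algebra K A]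

variable (K A) in
/-- The inclusions of `A` as the three tensor factors of `A ⊗ (A ⊗ A)`. -/
def tensorSlot : Fin 3 → A →ₐ[K] A ⊗[K] (A ⊗[K] A) :=
  ![Algebra.TensorProduct.includeLeft,
    Algebra.TensorProduct.includeRight.comp Algebra.TensorProduct.includeLeft,
    Algebra.TensorProduct.includeRight.comp Algebra.TensorProduct.includeRight]

theorem commute_tensorSlot {i j : Fin 3} (hij : i ≠ j) (a b : A) :
    Commute (tensorSlot K A i a) (tensorSlot K A j b) := by
  fin_cases i <;> fin_cases j <;> simp_all [commute_iff_eq, tensorSlot]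

theorem commute_tensorSlot_map {ι : A ⊗[K] A →ₐ[K] A ⊗[K] (A ⊗[K] A)} {i j k : Fin 3}
    (hι : ∀ a b, ι (a ⊗ₜ b) = tensorSlot K A i a * tensorSlot K A j b) (hki : k ≠ i) (hkj : k ≠ j)
    (a : A) (t : A ⊗[K] A) : Commute (tensorSlot K A k a) (ι t) := by
  induction t with
  | zero => rw [map_zero]; exact Commute.zero_right _
  | tmul b c =>
    rw [hι]
    exact (commute_tensorSlot hki a b).mul_right (commute_tensorSlot hkj a c)
  | add s t hs ht => rw [map_add]; exact hs.add_right ht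

end TensorCube

section YangBaxter

open MulOpposite

/-- The anti-automorphism of `Cl ⊗ (Cl ⊗ Cl)` reversing the products in each factor. -/
def reverseOp₃ (r : ℕ) : Cl r ⊗[ℂ] (Cl r ⊗[ℂ] Cl r) →ₐ[ℂ] (Cl r ⊗[ℂ] (Cl r ⊗[ℂ] Cl r))ᵐᵒᵖ :=
  (Algebra.TensorProduct.opAlgEquiv ℂ ℂ (Cl r) (Cl r ⊗[ℂ] Cl r)).toAlgHom.comp
    (Algebra.TensorProduct.map CliffordAlgebra.reverseOp
      ((Algebra.TensorProduct.opAlgEquiv ℂ ℂ (Cl r) (Cl r)).toAlgHom.comp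
        (Algebra.TensorProduct.map CliffordAlgebra.reverseOp CliffordAlgebra.reverseOp)))

variable {r : ℕ} {ι12 ι13 ι23 : Cl r ⊗[ℂ] Cl r →ₐ[ℂ] Cl r ⊗[ℂ] (Cl r ⊗[ℂ] Cl r)}

theorem reverseOp₃_halfI₁₂ (h12 : ∀ a b : Cl r, ι12 (a ⊗ₜ[ℂ] b) = a ⊗ₜ[ℂ] (b ⊗ₜ[ℂ] (1 : Cl r))) :
    reverseOp₃ r (ι12 (halfI r)) = op (ι12 (halfI r)) := by
  simp [reverseOp₃, halfI, ΓΓ, h12, Γgen]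

theorem reverseOp₃_halfI₁₃ (h13 : ∀ a b : Cl r, ι13 (a ⊗ₜ[ℂ] b) = a ⊗ₜ[ℂ] ((1 : Cl r) ⊗ₜ[ℂ] b)) :
    reverseOp₃ r (ι13 (halfI r)) = op (ι13 (halfI r)) := by
  simp [reverseOp₃, halfI, ΓΓ, h13, Γgen]

theorem isAnticommutatorSpin_halfI
    (h12 : ∀ a b : Cl r, ι12 (a ⊗ₜ[ℂ] b) = a ⊗ₜ[ℂ] (b ⊗ₜ[ℂ] (1 : Cl r)))
    (h13 : ∀ a b : Cl r, ι13 (a ⊗ₜ[ℂ] b) = a ⊗ₜ[ℂ] ((1 : Cl r) ⊗ₜ[ℂ] b))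
    (h23 : ∀ a b : Cl r, ι23 (a ⊗ₜ[ℂ] b) = (1 : Cl r) ⊗ₜ[ℂ] (a ⊗ₜ[ℂ] b)) :
    IsAnticommutatorSpin (ι12 (halfI r)) (ι13 (halfI r)) (ι23 (halfI r)) := by
  simp only [halfI, map_smul, map_sum]
  constructor <;> refine inv_two_smul_sum_anticomm fun j k => ?_ <;>
    rcases eq_or_ne j k with rfl | hjk
  · simp [ΓΓ, h12, h13, h23, Γgen_mul_self, two_mul]
  · simp [ΓΓ, h12, h13, hjk, Γgen_anticomm hjk, TensorProduct.neg_tmul]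
  · simp [ΓΓ, h12, h13, h23, Γgen_mul_self, two_mul]
  · simp [ΓΓ, h13, h23, hjk, Γgen_anticomm hjk, TensorProduct.tmul_neg]
  · simp [ΓΓ, h12, h13, h23, Γgen_mul_self, two_mul]
  · simp [ΓΓ, h12, h23, hjk, Γgen_anticomm hjk, TensorProduct.neg_tmul, TensorProduct.tmul_neg]

theorem unprojectedRmat_yangBaxter (hr : 2 ≤ r)
    (h12 : ∀ a b : Cl r, ι12 (a ⊗ₜ[ℂ] b) = a ⊗ₜ[ℂ] (b ⊗ₜ[ℂ] (1 : Cl r)))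
    (h13 : ∀ a b : Cl r, ι13 (a ⊗ₜ[ℂ] b) = a ⊗ₜ[ℂ] ((1 : Cl r) ⊗ₜ[ℂ] b))
    (h23 : ∀ a b : Cl r, ι23 (a ⊗ₜ[ℂ] b) = (1 : Cl r) ⊗ₜ[ℂ] (a ⊗ₜ[ℂ] b))
    {u v : ℂ}
    (hu : ∀ m : ℕ, 1 ≤ m → m ≤ r / 2 → u ≠ -(2 * (m : ℂ) - 1))
    (hv : ∀ m : ℕ, 1 ≤ m → m ≤ r / 2 → v ≠ -(2 * (m : ℂ) - 1))
    (huv : ∀ m : ℕ, 1 ≤ m → m ≤ r / 2 → u + v ≠ -(2 * (m : ℂ) - 1)) :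
    ι12 (unprojectedRmat r u) * ι13 (unprojectedRmat r (u + v)) * ι23 (unprojectedRmat r v)
      = ι23 (unprojectedRmat r v) * ι13 (unprojectedRmat r (u + v))
        * ι12 (unprojectedRmat r u) := by
  have no_pole {w : ℂ} (hw : ∀ m : ℕ, 1 ≤ m → m ≤ r / 2 → w ≠ -(2 * (m : ℂ) - 1)) (j : ℕ)
      (hj : 2 * j + 2 ≤ r) : w + (2 * j + 1) ≠ 0 := fun h =>
    hw (j + 1) (by omega) (by omega) (by push_cast; linear_combination h)
  exact (isRMatrix_map_unprojectedRmat hr ι12 u).yangBaxter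
    (isRMatrix_map_unprojectedRmat hr ι13 (u + v)) (isRMatrix_map_unprojectedRmat hr ι23 v)
    (isAnticommutatorSpin_halfI h12 h13 h23) (hasWeightsIn_map_halfI ι12)
    (hasWeightsIn_map_halfI ι13) (hasWeightsIn_map_halfI ι23) (reverseOp₃_halfI₁₂ h12)
    (reverseOp₃_halfI₁₃ h13) (no_pole hu) (no_pole hv) (no_pole huv)

theorem commute_tensorSlot_pCh {ι : Cl r ⊗[ℂ] Cl r →ₐ[ℂ] Cl r ⊗[ℂ] (Cl r ⊗[ℂ] Cl r)} {i j : Fin 3}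
    (hι : ∀ a b, ι (a ⊗ₜ b) = tensorSlot ℂ (Cl r) i a * tensorSlot ℂ (Cl r) j b) (ε u : ℂ)
    (k : Fin 3) : Commute (tensorSlot ℂ (Cl r) k (pCh r ε)) (ι (unprojectedRmat r u)) := by
  by_cases hki : k = i
  · have h := (commute_pCh_tmul_one ε u).map ι
    rwa [hι, map_one, mul_one, ← hki] at h
  by_cases hkj : k = j
  · have h := (commute_one_tmul_pCh ε u).map ι
    rwa [hι, map_one, one_mul, ← hkj] at h
  exact commute_tensorSlot_map hι hki hkj _ _

theorem map_Rmat {ι : Cl r ⊗[ℂ] Cl r →ₐ[ℂ] Cl r ⊗[ℂ] (Cl r ⊗[ℂ] Cl r)} {i j : Fin 3}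
    (hι : ∀ a b, ι (a ⊗ₜ b) = tensorSlot ℂ (Cl r) i a * tensorSlot ℂ (Cl r) j b) (ε u : ℂ) :
    ι (Rmat r ε u) = tensorSlot ℂ (Cl r) i (pCh r ε) * tensorSlot ℂ (Cl r) j (pCh r ε)
      * ι (unprojectedRmat r u) := by
  rw [Rmat_eq, map_mul, ppCh, hι]

theorem mul_mul_mul_of_commute {M : Type*} [Monoid M] {p q s a b c : M} (haq : Commute a q)
    (has : Commute a s) (hbs : Commute b s) :
    p * a * (q * b) * (s * c) = p * q * s * (a * b * c) := by
  calc p * a * (q * b) * (s * c) = p * (a * q) * (b * s) * c := by simp only [mul_assoc]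
    _ = p * q * (a * s) * b * c := by rw [haq.eq, hbs.eq]; simp only [mul_assoc]
    _ = p * q * s * (a * b * c) := by rw [has.eq]; simp only [mul_assoc]

theorem yangBaxter_mul_of_commute {M : Type*} [Monoid M] {p : Fin 3 → M} {a b c : M}
    (hp : ∀ i j, Commute (p i) (p j)) (ha : ∀ i, Commute (p i) a) (hb : ∀ i, Commute (p i) b)
    (hc : ∀ i, Commute (p i) c) (h : a * b * c = c * b * a) :
    p 0 * p 1 * a * (p 0 * p 2 * b) * (p 1 * p 2 * c)
      = p 1 * p 2 * c * (p 0 * p 2 * b) * (p 0 * p 1 * a) := by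
  have hpp (i j k l : Fin 3) : Commute (p i * p j) (p k * p l) :=
    ((hp i k).mul_right (hp i l)).mul_left ((hp j k).mul_right (hp j l))
  have hpa (i j : Fin 3) : Commute a (p i * p j) := ((ha i).mul_left (ha j)).symm
  have hpb (i j : Fin 3) : Commute b (p i * p j) := ((hb i).mul_left (hb j)).symm
  have hpc (i j : Fin 3) : Commute c (p i * p j) := ((hc i).mul_left (hc j)).symm
  rw [mul_mul_mul_of_commute (hpa _ _) (hpa _ _) (hpb _ _),
    mul_mul_mul_of_commute (hpc _ _) (hpc _ _) (hpb _ _), h,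
    ((hpp 0 1 1 2).mul_left (hpp 0 2 1 2)).eq, (hpp 0 1 0 2).eq,
    ← mul_assoc (p 1 * p 2)]

end YangBaxter

theorem Rmat_YangBaxter_general (r : ℕ) (hr : 2 ≤ r) (ε : ℂ)
    (ι12 ι13 ι23 : Cl r ⊗[ℂ] Cl r →ₐ[ℂ] Cl r ⊗[ℂ] (Cl r ⊗[ℂ] Cl r))
    (h12 : ∀ a b : Cl r, ι12 (a ⊗ₜ[ℂ] b) = a ⊗ₜ[ℂ] (b ⊗ₜ[ℂ] (1 : Cl r)))
    (h13 : ∀ a b : Cl r, ι13 (a ⊗ₜ[ℂ] b) = a ⊗ₜ[ℂ] ((1 : Cl r) ⊗ₜ[ℂ] b))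
    (h23 : ∀ a b : Cl r, ι23 (a ⊗ₜ[ℂ] b) = (1 : Cl r) ⊗ₜ[ℂ] (a ⊗ₜ[ℂ] b))
    (u v : ℂ)
    (hu : ∀ m : ℕ, 1 ≤ m → m ≤ r / 2 → u ≠ -(2 * (m : ℂ) - 1))
    (hv : ∀ m : ℕ, 1 ≤ m → m ≤ r / 2 → v ≠ -(2 * (m : ℂ) - 1))
    (huv : ∀ m : ℕ, 1 ≤ m → m ≤ r / 2 → u + v ≠ -(2 * (m : ℂ) - 1)) :
    ι12 (Rmat r ε u) * ι13 (Rmat r ε (u + v)) * ι23 (Rmat r ε v)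
      = ι23 (Rmat r ε v) * ι13 (Rmat r ε (u + v)) * ι12 (Rmat r ε u) := by
  have s12 (a b : Cl r) : ι12 (a ⊗ₜ b) = tensorSlot ℂ (Cl r) 0 a * tensorSlot ℂ (Cl r) 1 b := by
    simp [h12, tensorSlot]
  have s13 (a b : Cl r) : ι13 (a ⊗ₜ b) = tensorSlot ℂ (Cl r) 0 a * tensorSlot ℂ (Cl r) 2 b := by
    simp [h13, tensorSlot]
  have s23 (a b : Cl r) : ι23 (a ⊗ₜ b) = tensorSlot ℂ (Cl r) 1 a * tensorSlot ℂ (Cl r) 2 b := by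
    simp [h23, tensorSlot]
  rw [map_Rmat s12, map_Rmat s13, map_Rmat s23]
  refine yangBaxter_mul_of_commute (p := fun i => tensorSlot ℂ (Cl r) i (pCh r ε)) (fun i j => ?_)
    (commute_tensorSlot_pCh s12 ε u) (commute_tensorSlot_pCh s13 ε (u + v))
    (commute_tensorSlot_pCh s23 ε v) (unprojectedRmat_yangBaxter hr h12 h13 h23 hu hv huv)
  rcases eq_or_ne i j with rfl | hij
  exacts [Commute.refl _, commute_tensorSlot hij _ _]

/-- `R^{εε}(u)` satisfies the Yang–Baxter equation
`R₁₂(u)R₁₃(u+v)R₂₃(v) = R₂₃(v)R₁₃(u+v)R₁₂(u)`. -/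
theorem Rmat_YangBaxter (r : ℕ) (hr : 2 ≤ r) (ε : ℂ) (hε : ε = 1 ∨ ε = -1)
    (ι12 ι13 ι23 : Cl r ⊗[ℂ] Cl r →ₐ[ℂ] Cl r ⊗[ℂ] (Cl r ⊗[ℂ] Cl r))
    (h12 : ∀ a b : Cl r, ι12 (a ⊗ₜ[ℂ] b) = a ⊗ₜ[ℂ] (b ⊗ₜ[ℂ] (1 : Cl r)))
    (h13 : ∀ a b : Cl r, ι13 (a ⊗ₜ[ℂ] b) = a ⊗ₜ[ℂ] ((1 : Cl r) ⊗ₜ[ℂ] b))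
    (h23 : ∀ a b : Cl r, ι23 (a ⊗ₜ[ℂ] b) = (1 : Cl r) ⊗ₜ[ℂ] (a ⊗ₜ[ℂ] b))
    (u v : ℂ)
    (hu : ∀ m : ℕ, 1 ≤ m → m ≤ r/2 → u ≠ -(2*(m:ℂ) - 1))
    (hv : ∀ m : ℕ, 1 ≤ m → m ≤ r/2 → v ≠ -(2*(m:ℂ) - 1))
    (huv : ∀ m : ℕ, 1 ≤ m → m ≤ r/2 → u + v ≠ -(2*(m:ℂ) - 1)) :
    ι12 (Rmat r ε u) * ι13 (Rmat r ε (u+v)) * ι23 (Rmat r ε v)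
      = ι23 (Rmat r ε v) * ι13 (Rmat r ε (u+v)) * ι12 (Rmat r ε u) := by
  exact Rmat_YangBaxter_general r hr ε ι12 ι13 ι23 h12 h13 h23 u v hu hv huv

end
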